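/- arXiv:2406.01828 — 3 statements merged into one kernel-verified Lean document; each statement's English description precedes it below -/
import Mathlib

section
/- For every complex number s with s ≠ 1 and ζ(s) ≠ 0, one has −ζ'(s)/ζ(s) = 1/(s−1) − B − (1/2)·log π + (1/2)·Γ'(s/2+1)/Γ(s/2+1) − Σ_ρ m_ρ·(1/(s−ρ) + 1/ρ), where B = log(2√π) − 1 − γ/2 with γ the Euler–Mascheroni constant, the sum runs over all nontrivial zeros ρ of ζ, m_ρ is the order of vanishing of ζ at ρ, and the sum converges absolutely. -/
open Complex Real

/-- The set of nontrivial zeros of the Riemann zeta function. -/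
def nontrivialZetaZeros : Set ℂ :=
  {ρ : ℂ | riemannZeta ρ = 0 ∧ 0 < ρ.re ∧ ρ.re < 1}

/-- The order of vanishing of `ζ` at `ρ`: the least `m` such that the `m`-th derivative of
`ζ` does not vanish at `ρ`. -/
noncomputable def zetaZeroOrder (ρ : ℂ) : ℕ :=
  sInf {m : ℕ | iteratedDeriv m riemannZeta ρ ≠ 0}

/-- The constant `B = log(2√π) − 1 − γ/2`, with `γ` the Euler–Mascheroni constant. -/
noncomputable def hadamardB : ℝ :=
  Real.log (2 * Real.sqrt Real.pi) - 1 - Real.eulerMascheroniConstant / 2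

/-!
Riemann's function `ξ(s) = s(s - 1)Λ(s) / 2` is entire and its zeros are the nontrivial zeros of
`ζ`, with the same orders. Its growth is read off from the Mellin integral of `Λ₀`: the integrand
has a nonnegative kernel, so on a vertical strip `|Λ₀|` is bounded by the sum of its values at the
real endpoints `1 - 2n` and `2n`, which the functional equation and `Γ(n) ≤ n ^ n` control.
Hence `|ξ(s)| ≤ exp (K (1 + |s|) ^ p)` for every `p > 1`.

For an entire `F` with such a bound for some `p < 2` and `F 0 ≠ 0`, divide `F` by the factors
`z - a` of its zeros with `|a| ≤ R`. These factors are at most `R` in size at `0` and at least `3R`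
on `|z| = 4R`, so the maximum principle bounds both the number of these zeros and the quotient.
Borel–Carathéodory for the logarithm of the quotient, which has no zeros in `|z| < R`, shows that
its logarithmic derivative varies by `O(R ^ (p - 2))` on compact sets. Letting `R → ∞` gives
`F'/F(z) - F'/F(0) = ∑ m_a (1 / (z - a) + 1 / a)`.

For `F = ξ`, the factorisation `ξ(s) = π(s - 1)Γ_ℝ(s + 2)ζ(s)` turns the left-hand side into
`ζ'/ζ`, `Γ'/Γ` and elementary terms, and `ξ'/ξ(0) = -Λ₀(0)` gives the constant `B`.
-/

section AnalyticOrder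

variable {𝕜 E : Type*} [NontriviallyNormedField 𝕜] [CharZero 𝕜] [NormedAddCommGroup E]
  [NormedSpace 𝕜 E] [CompleteSpace E] {f : 𝕜 → E} {z : 𝕜}

lemma sInf_iteratedDeriv_ne_zero_eq_analyticOrderNatAt (hf : AnalyticAt 𝕜 f z) :
    sInf {m : ℕ | iteratedDeriv m f z ≠ 0} = analyticOrderNatAt f z := by
  by_cases htop : analyticOrderAt f z = ⊤
  -- At infinite order both sides are `0`, as values of `sInf ∅` and `ENat.toNat ⊤`.
  · have hzero : ∀ m, iteratedDeriv m f z = 0 := fun m =>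
      (natCast_le_analyticOrderAt_iff_iteratedDeriv_eq_zero hf).1 (htop ▸ le_top) m m.lt_succ_self
    simp [hzero, analyticOrderNatAt, htop]
  · obtain ⟨hlt, hne⟩ := (analyticOrderAt_eq_nat_iff_iteratedDeriv_eq_zero hf).1
      (Nat.cast_analyticOrderNatAt htop).symm
    exact IsLeast.csInf_eq ⟨hne, fun m hm => not_lt.1 fun h => hm (hlt m h)⟩

end AnalyticOrder

lemma logDeriv_prod_pow_mul {𝕜 : Type*} [NontriviallyNormedField 𝕜] {g : 𝕜 → 𝕜} {S : Finset 𝕜}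
    (n : 𝕜 → ℕ) {z : 𝕜} (hz : z ∉ S) (hg : DifferentiableAt 𝕜 g z) (hgz : g z ≠ 0) :
    logDeriv (fun w => (∏ a ∈ S, (w - a) ^ n a) * g w) z =
      ∑ a ∈ S, (n a : 𝕜) * (1 / (z - a)) + logDeriv g z := by
  have hsub : ∀ a ∈ S, z - a ≠ 0 := fun a ha => sub_ne_zero.2 fun h => hz (h ▸ ha)
  rw [logDeriv_mul z (Finset.prod_ne_zero_iff.2 fun a ha => pow_ne_zero _ (hsub a ha)) hgz
    (by fun_prop) hg, logDeriv_prod (f := fun a w => (w - a) ^ n a)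
    (fun a ha => pow_ne_zero _ (hsub a ha)) (fun a _ => by fun_prop)]
  congr 1
  refine Finset.sum_congr rfl fun a _ => ?_
  rw [logDeriv_fun_pow (by fun_prop), logDeriv_apply, deriv_sub_const, deriv_id'']

section EntireFunctions

open Metric Filter Topology

variable {F g : ℂ → ℂ} {R M : ℝ}

lemma exists_differentiable_eq_pow_mul (hF : Differentiable ℂ F) {a : ℂ} {n : ℕ}
    (hn : analyticOrderAt F a = n) :
    ∃ g : ℂ → ℂ, Differentiable ℂ g ∧ g a ≠ 0 ∧ ∀ z, F z = (z - a) ^ n * g z := by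
  induction n generalizing F with
  | zero =>
    exact ⟨F, hF, (hF.analyticAt a).analyticOrderAt_eq_zero.1 hn,
      fun z => by rw [pow_zero, one_mul]⟩
  | succ n ih =>
    have hFa : F a = 0 := apply_eq_zero_of_analyticOrderAt_ne_zero (by simp [hn])
    have hslope : F = (· - a) * dslope F a := by
      funext z
      simpa [hFa] using (sub_smul_dslope F a z).symm
    have hd : Differentiable ℂ (dslope F a) := by
      simpa [differentiableOn_univ] using
        (differentiableOn_dslope (univ_mem (f := 𝓝 a))).2 hF.differentiableOn
    have hord : analyticOrderAt F a = 1 + analyticOrderAt (dslope F a) a := by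
      conv_lhs => rw [hslope]
      rw [analyticOrderAt_mul (by fun_prop) (hd.analyticAt a), analyticOrderAt_id_sub_const_self]
    obtain ⟨g, hg, hga, hFg⟩ := ih hd <|
      ENat.add_left_injective_of_ne_top ENat.one_ne_top <| by
        simpa only [hord, add_comm, Nat.cast_succ] using hn
    refine ⟨g, hg, hga, fun z => ?_⟩
    rw [hslope, Pi.mul_apply, hFg z, pow_succ', mul_assoc]

lemma analyticOrderAt_ne_top_of_differentiable (hF : Differentiable ℂ F) {z₀ : ℂ}
    (h₀ : F z₀ ≠ 0) (a : ℂ) : analyticOrderAt F a ≠ ⊤ := by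
  have hF' : AnalyticOnNhd ℂ F Set.univ := fun z _ => hF.analyticAt z
  refine hF'.analyticOrderAt_ne_top_of_isPreconnected isPreconnected_univ (Set.mem_univ z₀)
    (Set.mem_univ a) ?_
  rw [(hF.analyticAt z₀).analyticOrderAt_eq_zero.2 h₀]
  exact ENat.zero_ne_top

lemma exists_differentiable_eq_prod_pow_mul (hF : Differentiable ℂ F) {z₀ : ℂ} (h₀ : F z₀ ≠ 0)
    (S : Finset ℂ) :
    ∃ g : ℂ → ℂ, Differentiable ℂ g ∧ (∀ a ∈ S, g a ≠ 0) ∧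
      ∀ z, F z = (∏ a ∈ S, (z - a) ^ analyticOrderNatAt F a) * g z := by
  classical
  induction S using Finset.induction_on with
  | empty => exact ⟨F, hF, by simp, by simp⟩
  | insert b S hb ih =>
    obtain ⟨g, hg, hgS, hFg⟩ := ih
    set P : ℂ → ℂ := fun z => ∏ a ∈ S, (z - a) ^ analyticOrderNatAt F a
    have hP : Differentiable ℂ P := by fun_prop
    have hPb : P b ≠ 0 := Finset.prod_ne_zero_iff.2 fun a ha =>
      pow_ne_zero _ (sub_ne_zero.2 fun hba => hb (hba ▸ ha))
    have hord : analyticOrderAt g b = analyticOrderAt F b := by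
      rw [show F = P * g from funext hFg, analyticOrderAt_mul (hP.analyticAt b) (hg.analyticAt b),
        (hP.analyticAt b).analyticOrderAt_eq_zero.2 hPb, zero_add]
    rw [← Nat.cast_analyticOrderNatAt (analyticOrderAt_ne_top_of_differentiable hF h₀ b)] at hord
    obtain ⟨q, hq, hqb, hgq⟩ := exists_differentiable_eq_pow_mul hg hord
    refine ⟨q, hq, Finset.forall_mem_insert _ _ _ |>.2 ⟨hqb, fun a ha hqa => ?_⟩, fun z => ?_⟩
    · exact hgS a ha (by rw [hgq, hqa, mul_zero])
    · rw [Finset.prod_insert hb, hFg, hgq z]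
      ring

lemma exists_hasDerivAt_logDeriv_and_eq_mul_exp {c : ℂ} (hg : DifferentiableOn ℂ g (ball c R))
    (hg0 : ∀ z ∈ ball c R, g z ≠ 0) :
    ∃ h : ℂ → ℂ, h c = 0 ∧
      ∀ z ∈ ball c R, HasDerivAt h (logDeriv g z) z ∧ g z = g c * exp (h z) := by
  have hlog : DifferentiableOn ℂ (logDeriv g) (ball c R) :=
    (hg.deriv isOpen_ball).div hg hg0
  obtain ⟨h, hc, hh⟩ := hlog.isExactOn_ball.with_val_at c 0
  refine ⟨h, hc, fun z hz => ⟨hh z hz, ?_⟩⟩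
  have hderiv : ∀ w ∈ ball c R, HasDerivAt (fun w => g w * exp (-h w)) 0 w := fun w hw => by
    refine (((hg.differentiableAt (isOpen_ball.mem_nhds hw)).hasDerivAt.mul
      (hh w hw).neg.cexp)).congr_deriv ?_
    have := hg0 w hw
    rw [logDeriv_apply]
    field_simp
    ring
  have hconst : g z * exp (-h z) = g c * exp (-h c) :=
    isOpen_ball.is_const_of_deriv_eq_zero (convex_ball c R).isPreconnected
      (fun w hw => (hderiv w hw).differentiableAt.differentiableWithinAt)
      (fun w hw => (hderiv w hw).deriv) hz (mem_ball_self (pos_of_mem_ball hz))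
  rw [hc, neg_zero, Complex.exp_zero, mul_one] at hconst
  rw [← hconst, mul_assoc, ← Complex.exp_add, neg_add_cancel, Complex.exp_zero, mul_one]

lemma norm_deriv_sub_deriv_center_le {f : ℂ → ℂ} {c z : ℂ} {C : ℝ}
    (hf : DifferentiableOn ℂ f (ball c R)) (hC : ∀ w ∈ ball c R, ‖f w‖ ≤ C)
    (hz : z ∈ ball c (R / 2)) :
    ‖deriv f z - deriv f c‖ ≤ 32 * C / R ^ 2 * ‖z - c‖ := by
  have hR : 0 < R := by linarith [pos_of_mem_ball hz]
  have hsub : ∀ w ∈ ball c (R / 2), closedBall w (R / 4) ⊆ ball c R := fun w hw =>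
    closedBall_subset_ball' (by linarith [mem_ball.1 hw])
  have hsecond : ∀ w ∈ ball c (R / 2), ‖deriv (deriv f) w‖ ≤ 32 * C / R ^ 2 := fun w hw => by
    have hCauchy := norm_iteratedDeriv_le_of_forall_mem_sphere_norm_le 2 (by positivity)
      (hf.mono (closure_ball_subset_closedBall.trans (hsub w hw))).diffContOnCl
      (fun x hx => hC x (hsub w hw (sphere_subset_closedBall hx)))
    rw [iteratedDeriv_succ, iteratedDeriv_one] at hCauchy
    refine hCauchy.trans_eq ?_
    rw [Nat.factorial_two, Nat.cast_two]
    field_simp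
    ring
  have hderiv : DifferentiableOn ℂ (deriv f) (ball c R) := hf.deriv isOpen_ball
  exact (convex_ball c (R / 2)).norm_image_sub_le_of_norm_deriv_le
    (fun w hw => hderiv.differentiableAt
      (isOpen_ball.mem_nhds (ball_subset_ball (by linarith) hw)))
    hsecond (mem_ball_self (by positivity)) hz

lemma norm_logDeriv_sub_logDeriv_zero_le (hg : DifferentiableOn ℂ g (ball 0 R))
    (hg0 : ∀ z ∈ ball 0 R, g z ≠ 0) (hM : 0 < M)
    (hgM : ∀ z ∈ ball 0 R, ‖g z‖ ≤ rexp M * ‖g 0‖) {z : ℂ} (hz : z ∈ ball 0 (R / 4)) :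
    ‖logDeriv g z - logDeriv g 0‖ ≤ 256 * M / R ^ 2 * ‖z‖ := by
  have hR : 0 < R := by linarith [pos_of_mem_ball hz]
  obtain ⟨h, h0, hh⟩ := exists_hasDerivAt_logDeriv_and_eq_mul_exp hg hg0
  have hd : DifferentiableOn ℂ h (ball 0 R) :=
    fun w hw => (hh w hw).1.differentiableAt.differentiableWithinAt
  have hre : Set.MapsTo h (ball 0 R) {w | w.re ≤ M} := fun w hw => by
    have hexp := hgM w hw
    rw [(hh w hw).2, norm_mul, mul_comm, norm_exp] at hexp
    exact Real.exp_le_exp.1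
      (le_of_mul_le_mul_right hexp (norm_pos_iff.2 (hg0 0 (mem_ball_self hR))))
  have hbound : ∀ w ∈ ball 0 (R / 2), ‖h w‖ ≤ 2 * M := fun w hw => by
    rw [mem_ball_zero_iff] at hw
    refine (borelCaratheodory_zero hM hd hre hR (by simpa using by linarith) h0).trans ?_
    rw [div_le_iff₀ (by linarith)]
    gcongr
    linarith
  have hmain := norm_deriv_sub_deriv_center_le (hd.mono (ball_subset_ball (by linarith))) hbound
    (z := z) (by rwa [show R / 2 / 2 = R / 4 by ring])
  have hsub : ball (0 : ℂ) (R / 4) ⊆ ball 0 R := ball_subset_ball (by linarith)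
  rw [(hh z (hsub hz)).1.deriv, (hh 0 (mem_ball_self hR)).1.deriv, sub_zero] at hmain
  refine hmain.trans_eq ?_
  field_simp
  ring

lemma three_pow_mul_norm_mul_norm_le (hg : Differentiable ℂ g) {S : Finset ℂ} {n : ℂ → ℕ} {B : ℝ}
    (hFg : ∀ z, F z = (∏ a ∈ S, (z - a) ^ n a) * g z) (hR : 0 < R) (hS : ∀ a ∈ S, ‖a‖ ≤ R)
    (hB : ∀ z, ‖z‖ = 4 * R → ‖F z‖ ≤ B) {z : ℂ} (hz : ‖z‖ ≤ 4 * R) :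
    3 ^ (∑ a ∈ S, n a) * ‖F 0‖ * ‖g z‖ ≤ B * ‖g 0‖ := by
  have hsphere : ∀ w, ‖w‖ = 4 * R → ‖g w‖ ≤ B / (3 * R) ^ (∑ a ∈ S, n a) := fun w hw => by
    rw [le_div_iff₀ (by positivity), mul_comm]
    refine le_trans ?_ (hB w hw)
    rw [hFg, norm_mul, norm_prod, ← Finset.prod_pow_eq_pow_sum]
    gcongr with a ha
    rw [norm_pow]
    gcongr
    linarith [norm_sub_norm_le w a, hS a ha]
  have hdisc : ‖g z‖ ≤ B / (3 * R) ^ (∑ a ∈ S, n a) := by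
    refine norm_le_of_forall_mem_frontier_norm_le isBounded_ball (U := ball 0 (4 * R))
      hg.diffContOnCl (fun w hw => hsphere w ?_) ?_
    · rwa [frontier_ball _ (by positivity), mem_sphere_zero_iff_norm] at hw
    · rwa [closure_ball _ (by positivity), mem_closedBall_zero_iff]
  have hzero : ‖F 0‖ ≤ R ^ (∑ a ∈ S, n a) * ‖g 0‖ := by
    rw [hFg, norm_mul, norm_prod, ← Finset.prod_pow_eq_pow_sum]
    gcongr with a ha
    rw [norm_pow, zero_sub, norm_neg]
    gcongr
    exact hS a ha
  rw [le_div_iff₀ (by positivity)] at hdisc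
  calc 3 ^ (∑ a ∈ S, n a) * ‖F 0‖ * ‖g z‖
      ≤ 3 ^ (∑ a ∈ S, n a) * (R ^ (∑ a ∈ S, n a) * ‖g 0‖) * ‖g z‖ := by gcongr
    _ = ‖g z‖ * (3 * R) ^ (∑ a ∈ S, n a) * ‖g 0‖ := by rw [mul_pow]; ring
    _ ≤ B * ‖g 0‖ := by gcongr

lemma sum_analyticOrderNatAt_le (hF : Differentiable ℂ F) (h0 : F 0 ≠ 0) (hR : 0 < R)
    (hFM : ∀ z, ‖z‖ ≤ 4 * R → ‖F z‖ ≤ rexp M * ‖F 0‖) {S : Finset ℂ} (hS : ∀ a ∈ S, ‖a‖ ≤ R) :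
    ∑ a ∈ S, (analyticOrderNatAt F a : ℝ) ≤ M := by
  obtain ⟨g, hg, -, hFg⟩ := exists_differentiable_eq_prod_pow_mul hF h0 S
  have hg0 : g 0 ≠ 0 := fun h => h0 (by rw [hFg, h, mul_zero])
  have hmax := three_pow_mul_norm_mul_norm_le hg hFg hR hS (fun z hz => hFM z hz.le) (z := 0)
    (by simp [hR.le])
  have hpow : (3 : ℝ) ^ (∑ a ∈ S, analyticOrderNatAt F a) ≤ rexp M :=
    le_of_mul_le_mul_right (le_of_mul_le_mul_right hmax (norm_pos_iff.2 hg0)) (norm_pos_iff.2 h0)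
  have hexp : rexp (∑ a ∈ S, analyticOrderNatAt F a : ℕ) ≤
      3 ^ (∑ a ∈ S, analyticOrderNatAt F a) := by
    rw [← Real.exp_one_pow]
    gcongr
    exact Real.exp_one_lt_three.le
  rw [← Nat.cast_sum]
  exact Real.exp_le_exp.1 (hexp.trans hpow)

lemma norm_logDeriv_sub_sum_le (hF : Differentiable ℂ F) (h0 : F 0 ≠ 0) (hM : 0 < M)
    (hFM : ∀ z, ‖z‖ ≤ 4 * R → ‖F z‖ ≤ rexp M * ‖F 0‖) {S : Finset ℂ}
    (hS : ∀ a, a ∈ S ↔ F a = 0 ∧ ‖a‖ ≤ R) {z : ℂ} (hz : ‖z‖ < R / 4) (hFz : F z ≠ 0) :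
    ‖logDeriv F z - logDeriv F 0 -
        ∑ a ∈ S, (analyticOrderNatAt F a : ℂ) * (1 / (z - a) + 1 / a)‖ ≤
      256 * M / R ^ 2 * ‖z‖ := by
  have hR : 0 < R := by linarith [norm_nonneg z]
  obtain ⟨g, hg, hgS, hFg⟩ := exists_differentiable_eq_prod_pow_mul hF h0 S
  have hlog : ∀ w, F w ≠ 0 → logDeriv F w =
      ∑ a ∈ S, (analyticOrderNatAt F a : ℂ) * (1 / (w - a)) + logDeriv g w := fun w hw => by
    conv_lhs => rw [show F = _ from funext hFg]
    exact logDeriv_prod_pow_mul _ (fun hwS => hw ((hS w).1 hwS).1) (hg w)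
      fun h => hw (by rw [hFg, h, mul_zero])
  have hgne : ∀ w ∈ ball 0 R, g w ≠ 0 := fun w hw h =>
    hgS w ((hS w).2 ⟨by rw [hFg, h, mul_zero], (mem_ball_zero_iff.1 hw).le⟩) h
  have hgM : ∀ w ∈ ball 0 R, ‖g w‖ ≤ rexp M * ‖g 0‖ := fun w hw => by
    have hmax := three_pow_mul_norm_mul_norm_le hg hFg hR (fun a ha => ((hS a).1 ha).2)
      (fun z hz => hFM z hz.le) (z := w) (by linarith [mem_ball_zero_iff.1 hw])
    have hpow : (1 : ℝ) ≤ 3 ^ (∑ a ∈ S, analyticOrderNatAt F a) := one_le_pow₀ (by norm_num)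
    refine le_of_mul_le_mul_left ?_ (norm_pos_iff.2 h0)
    calc ‖F 0‖ * ‖g w‖ ≤ 3 ^ (∑ a ∈ S, analyticOrderNatAt F a) * ‖F 0‖ * ‖g w‖ := by
          rw [mul_assoc]
          exact le_mul_of_one_le_left (by positivity) hpow
      _ ≤ rexp M * ‖F 0‖ * ‖g 0‖ := hmax
      _ = ‖F 0‖ * (rexp M * ‖g 0‖) := by ring
  have hmain := norm_logDeriv_sub_logDeriv_zero_le hg.differentiableOn hgne hM hgM (z := z)
    (by simpa using hz)
  convert hmain using 2
  rw [hlog z hFz, hlog 0 h0]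
  simp only [mul_add, Finset.sum_add_distrib, zero_sub, one_div, inv_neg, mul_neg,
    Finset.sum_neg_distrib]
  ring

lemma tendsto_norm_zeros_cofinite_atTop (hF : Differentiable ℂ F) {z₀ : ℂ} (h₀ : F z₀ ≠ 0) :
    Tendsto (fun a : F ⁻¹' {0} => ‖(a : ℂ)‖) cofinite atTop := by
  have hF' : AnalyticOnNhd ℂ F Set.univ := fun z _ => hF.analyticAt z
  have hzeros := mem_codiscrete'.1 (hF'.preimage_zero_mem_codiscrete h₀)
  rw [Set.preimage_compl, isOpen_compl_iff, compl_compl] at hzeros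
  exact tendsto_norm_cocompact_atTop.comp (hzeros.1.tendsto_coe_cofinite_of_isDiscrete hzeros.2)

lemma finite_zeros_norm_le (hF : Differentiable ℂ F) {z₀ : ℂ} (h₀ : F z₀ ≠ 0) (R : ℝ) :
    {a : F ⁻¹' {0} | ‖(a : ℂ)‖ ≤ R}.Finite := by
  have hgt := (tendsto_norm_zeros_cofinite_atTop hF h₀).eventually_gt_atTop R
  simpa only [eventually_cofinite, not_lt] using hgt

lemma summable_mul_rpow_neg_of_sum_le {ι : Type*} {w r : ι → ℝ} {C p q : ℝ} (hw : ∀ i, 0 ≤ w i)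
    (hr : ∀ i, 1 ≤ r i) (hq : 0 ≤ q) (hpq : p < q)
    (hcount : ∀ R, 1 ≤ R → ∀ T : Finset ι, (∀ i ∈ T, r i ≤ R) → ∑ i ∈ T, w i ≤ C * R ^ p) :
    Summable fun i => w i * r i ^ (-q) := by
  classical
  -- Sum over the dyadic shells `2 ^ k ≤ r i < 2 ^ (k + 1)`.
  choose k hkr hrk using fun i => exists_nat_pow_near (hr i) one_lt_two
  have hC : 0 ≤ C := by simpa using hcount 1 le_rfl ∅ (by simp)
  have hgeom : Summable fun j : ℕ => C * 2 ^ p * (2 ^ (p - q)) ^ j :=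
    (summable_geometric_of_lt_one (by positivity)
      (Real.rpow_lt_one_of_one_lt_of_neg one_lt_two (by linarith))).mul_left _
  have hfiber : ∀ (T : Finset ι) (j : ℕ),
      ∑ i ∈ T with k i = j, w i * r i ^ (-q) ≤ C * 2 ^ p * (2 ^ (p - q)) ^ j := fun T j => by
    calc ∑ i ∈ T with k i = j, w i * r i ^ (-q)
        ≤ ∑ i ∈ T with k i = j, w i * (2 ^ j) ^ (-q) := by
          refine Finset.sum_le_sum fun i hi => mul_le_mul_of_nonneg_left ?_ (hw i)
          rw [← (Finset.mem_filter.1 hi).2]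
          exact Real.rpow_le_rpow_of_nonpos (by positivity) (hkr i) (by linarith)
      _ = (∑ i ∈ T with k i = j, w i) * (2 ^ j) ^ (-q) := by rw [Finset.sum_mul]
      _ ≤ C * (2 ^ (j + 1)) ^ p * (2 ^ j) ^ (-q) := by
          gcongr
          refine hcount _ (one_le_pow₀ one_le_two) _ fun i hi => ?_
          rw [← (Finset.mem_filter.1 hi).2]
          exact (hrk i).le
      _ = C * 2 ^ p * (2 ^ (p - q)) ^ j := by
          rw [pow_succ, Real.mul_rpow (by positivity) zero_le_two, sub_eq_add_neg,
            Real.rpow_add two_pos, mul_pow, Real.rpow_pow_comm zero_le_two,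
            Real.rpow_pow_comm zero_le_two]
          ring
  refine summable_of_sum_le (fun i => mul_nonneg (hw i) (by have := hr i; positivity))
    (c := ∑' j : ℕ, C * 2 ^ p * (2 ^ (p - q)) ^ j) fun T => ?_
  rw [← Finset.sum_fiberwise_of_maps_to (fun i hi => Finset.mem_image_of_mem k hi)]
  exact (Finset.sum_le_sum fun j _ => hfiber T j).trans
    (hgeom.sum_le_tsum _ fun _ _ => by positivity)

lemma norm_one_div_sub_add_one_div_le {a z : ℂ} (ha : 2 * ‖z‖ + 1 < ‖a‖) :
    ‖1 / (z - a) + 1 / a‖ ≤ 8 * ‖z‖ * (1 + ‖a‖) ^ (-2 : ℝ) := by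
  have hz := norm_nonneg z
  have ha0 : a ≠ 0 := norm_pos_iff.1 (by linarith)
  have hsub : ‖a‖ / 2 ≤ ‖z - a‖ := by
    rw [norm_sub_rev]
    linarith [norm_sub_norm_le a z]
  have hza : z - a ≠ 0 := norm_pos_iff.1 (by linarith)
  calc ‖1 / (z - a) + 1 / a‖ = ‖z‖ / (‖z - a‖ * ‖a‖) := by
        rw [← norm_mul, ← norm_div]
        congr 1
        field_simp
        ring
    _ ≤ ‖z‖ / ((1 + ‖a‖) ^ 2 / 8) := by
        gcongr
        nlinarith
    _ = 8 * ‖z‖ * (1 + ‖a‖) ^ (-2 : ℝ) := by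
        rw [Real.rpow_neg (by positivity), Real.rpow_two]
        field_simp

lemma summable_mul_one_div_sub_add_one_div {ι : Type*} {c a : ι → ℂ}
    (ha : Tendsto (fun i => ‖a i‖) cofinite atTop)
    (hc : Summable fun i => ‖c i‖ * (1 + ‖a i‖) ^ (-2 : ℝ)) (z : ℂ) :
    Summable fun i => c i * (1 / (z - a i) + 1 / a i) := by
  refine (hc.mul_left (8 * ‖z‖)).of_norm_bounded_eventually ?_
  filter_upwards [ha.eventually_gt_atTop (2 * ‖z‖ + 1)] with i hi
  rw [norm_mul, mul_left_comm]
  gcongr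
  exact norm_one_div_sub_add_one_div_le hi

/-- `F` grows at most like `exp (K * (1 + ‖z‖) ^ p)` for some `K`; for an entire function this
says that its order is at most `p` and, if equal to `p`, of finite type. -/
def HasGrowthExponent (F : ℂ → ℂ) (p : ℝ) : Prop :=
  ∃ K : ℝ, ∀ z, ‖F z‖ ≤ rexp (K * (1 + ‖z‖) ^ p)

namespace HasGrowthExponent

variable {p : ℝ}

lemma exists_norm_le_exp_mul_norm_zero (hFp : HasGrowthExponent F p) (hp : 0 ≤ p) (h0 : F 0 ≠ 0) :
    ∃ K > 0, ∀ R, 1 ≤ R → ∀ z, ‖z‖ ≤ 4 * R → ‖F z‖ ≤ rexp (K * R ^ p) * ‖F 0‖ := by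
  obtain ⟨K, hK⟩ := hFp
  refine ⟨|K| * 5 ^ p + |Real.log ‖F 0‖| + 1, by positivity, fun R hR z hz => (hK z).trans ?_⟩
  have hRp : 1 ≤ R ^ p := Real.one_le_rpow hR hp
  have hbase : K * (1 + ‖z‖) ^ p ≤ |K| * 5 ^ p * R ^ p := by
    rw [mul_assoc, ← Real.mul_rpow (by norm_num) (by linarith)]
    gcongr
    · exact le_abs_self K
    · linarith
  have hlog : -Real.log ‖F 0‖ ≤ |Real.log ‖F 0‖| * R ^ p :=
    (neg_le_abs _).trans (le_mul_of_one_le_right (abs_nonneg _) hRp)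
  calc rexp (K * (1 + ‖z‖) ^ p)
      ≤ rexp ((|K| * 5 ^ p + |Real.log ‖F 0‖| + 1) * R ^ p + Real.log ‖F 0‖) := by
        gcongr
        linarith
    _ = _ := by rw [Real.exp_add, Real.exp_log (norm_pos_iff.2 h0)]

lemma summable_analyticOrderNatAt_mul_rpow (hFp : HasGrowthExponent F p) (hF : Differentiable ℂ F)
    (h0 : F 0 ≠ 0) (hp : 0 ≤ p) {q : ℝ} (hpq : p < q) :
    Summable fun a : F ⁻¹' {0} => (analyticOrderNatAt F a : ℝ) * (1 + ‖(a : ℂ)‖) ^ (-q) := by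
  obtain ⟨K, -, hFK⟩ := hFp.exists_norm_le_exp_mul_norm_zero hp h0
  refine summable_mul_rpow_neg_of_sum_le (fun _ => Nat.cast_nonneg _) (fun a => by simp)
    (hp.trans hpq.le) hpq (C := K) fun R hR T hT => ?_
  have hcount := sum_analyticOrderNatAt_le hF h0 (by linarith) (hFK R hR)
    (S := T.map (Function.Embedding.subtype _)) (by
      simp only [Finset.mem_map, Function.Embedding.subtype_apply]
      rintro _ ⟨a, ha, rfl⟩
      linarith [hT a ha])
  simpa using hcount

lemma summable_zeros (hFp : HasGrowthExponent F p) (hF : Differentiable ℂ F) (h0 : F 0 ≠ 0)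
    (hp : 0 ≤ p) (hp2 : p < 2) (z : ℂ) :
    Summable fun a : F ⁻¹' {0} => (analyticOrderNatAt F a : ℂ) * (1 / (z - a) + 1 / (a : ℂ)) :=
  summable_mul_one_div_sub_add_one_div (tendsto_norm_zeros_cofinite_atTop hF h0)
    (by simpa using hFp.summable_analyticOrderNatAt_mul_rpow hF h0 hp hp2) z

theorem hasSum_logDeriv (hFp : HasGrowthExponent F p) (hF : Differentiable ℂ F) (h0 : F 0 ≠ 0)
    (hp : 0 ≤ p) (hp2 : p < 2) {z : ℂ} (hFz : F z ≠ 0) :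
    HasSum (fun a : F ⁻¹' {0} => (analyticOrderNatAt F a : ℂ) * (1 / (z - a) + 1 / (a : ℂ)))
      (logDeriv F z - logDeriv F 0) := by
  obtain ⟨K, hK, hFK⟩ := hFp.exists_norm_le_exp_mul_norm_zero hp h0
  let T : ℕ → Finset (F ⁻¹' {0}) := fun k => (finite_zeros_norm_le hF h0 k).toFinset
  have hT : Tendsto T atTop atTop := by
    refine tendsto_atTop_finset_of_monotone (fun i j hij => ?_) fun a => ?_
    · exact Set.Finite.toFinset_subset_toFinset.2 fun a (ha : ‖(a : ℂ)‖ ≤ i) =>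
        show ‖(a : ℂ)‖ ≤ j from ha.trans (Nat.cast_le.2 hij)
    · obtain ⟨k, hk⟩ := exists_nat_ge ‖(a : ℂ)‖
      exact ⟨k, (Set.Finite.mem_toFinset _).2 hk⟩
  have hbound : ∀ᶠ k : ℕ in atTop, ‖logDeriv F z - logDeriv F 0 -
      ∑ a ∈ T k, (analyticOrderNatAt F a : ℂ) * (1 / (z - a) + 1 / (a : ℂ))‖ ≤
        256 * K * ‖z‖ * (k : ℝ) ^ (-(2 - p)) := by
    filter_upwards [eventually_ge_atTop 1, tendsto_natCast_atTop_atTop.eventually_gt_atTop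
      (4 * ‖z‖)] with k hk1 hkz
    have hk : (0 : ℝ) < k := mod_cast hk1
    have happrox := norm_logDeriv_sub_sum_le hF h0 (by positivity) (hFK k (mod_cast hk1))
      (S := (T k).map (.subtype _)) (fun a => by simp [T, and_comm]) (z := z) (by linarith) hFz
    rw [Finset.sum_map] at happrox
    refine happrox.trans_eq ?_
    rw [neg_sub, Real.rpow_sub hk, Real.rpow_two]
    ring
  have hzero : Tendsto (fun k : ℕ => 256 * K * ‖z‖ * (k : ℝ) ^ (-(2 - p))) atTop (𝓝 0) := by
    simpa using ((tendsto_rpow_neg_atTop (by linarith : 0 < 2 - p)).comp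
      tendsto_natCast_atTop_atTop).const_mul (256 * K * ‖z‖)
  have hlim := squeeze_zero_norm' hbound hzero
  have hsum := (hFp.summable_zeros hF h0 hp hp2 z).hasSum
  rwa [← sub_eq_zero.1 (tendsto_nhds_unique ((hsum.comp hT).const_sub _) hlim)] at hsum

end HasGrowthExponent

end EntireFunctions

section Mellin

open MeasureTheory Set

open scoped ComplexOrder

variable {f : ℝ → ℂ} {a b : ℝ} {s : ℂ}

lemma norm_cpow_sub_one_smul {E : Type*} [SeminormedAddCommGroup E] [NormedSpace ℂ E] (f : ℝ → E)
    (s : ℂ) {t : ℝ} (ht : 0 < t) :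
    ‖(t : ℂ) ^ (s - 1) • f t‖ = t ^ (s.re - 1) * ‖f t‖ := by
  rw [norm_smul, norm_cpow_eq_rpow_re_of_pos ht, sub_re, one_re]

lemma norm_mellin_ofReal (hf : ∀ t, 0 < t → 0 ≤ f t) (a : ℝ) :
    ‖mellin f a‖ = ∫ t in Ioi 0, t ^ (a - 1) * ‖f t‖ := by
  have hreal : mellin f a = ((∫ t in Ioi 0, t ^ (a - 1) * ‖f t‖ : ℝ) : ℂ) := by
    rw [mellin, ← integral_complex_ofReal]
    refine setIntegral_congr_fun measurableSet_Ioi fun t (ht : 0 < t) => ?_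
    simp only [smul_eq_mul]
    rw [ofReal_mul, ← eq_coe_norm_of_nonneg (hf t ht), ofReal_cpow ht.le]
    push_cast
    rfl
  rw [hreal, Complex.norm_real, Real.norm_of_nonneg]
  exact setIntegral_nonneg measurableSet_Ioi fun t (ht : 0 < t) => by positivity

lemma norm_mellin_le_add (hf : ∀ t, 0 < t → 0 ≤ f t) (hfa : MellinConvergent f a)
    (hfb : MellinConvergent f b) (ha : a ≤ s.re) (hb : s.re ≤ b) :
    ‖mellin f s‖ ≤ ‖mellin f a‖ + ‖mellin f b‖ := by
  have hint : ∀ {c : ℝ}, MellinConvergent f c →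
      IntegrableOn (fun t => t ^ (c - 1) * ‖f t‖) (Ioi 0) := fun {c} hc =>
    (integrableOn_congr_fun (fun t ht => norm_cpow_sub_one_smul f c ht) measurableSet_Ioi).1 hc.norm
  have hpow : ∀ t : ℝ, 0 < t → t ^ (s.re - 1) ≤ t ^ (a - 1) + t ^ (b - 1) := fun t ht => by
    rcases le_total t 1 with h | h
    · have := Real.rpow_le_rpow_of_exponent_ge ht h (sub_le_sub_right ha 1)
      linarith [Real.rpow_nonneg ht.le (b - 1)]
    · have := Real.rpow_le_rpow_of_exponent_le h (sub_le_sub_right hb 1)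
      linarith [Real.rpow_nonneg ht.le (a - 1)]
  rw [norm_mellin_ofReal hf, norm_mellin_ofReal hf, ← integral_add (hint hfa) (hint hfb)]
  refine norm_integral_le_of_norm_le ((hint hfa).add (hint hfb)) <|
    (ae_restrict_iff' measurableSet_Ioi).2 <| .of_forall fun t (ht : 0 < t) => ?_
  rw [norm_cpow_sub_one_smul f s ht, ← add_mul]
  exact mul_le_mul_of_nonneg_right (hpow t ht) (norm_nonneg _)

end Mellin

section ThetaKernel

open HurwitzZeta

open scoped ComplexOrder

lemma one_le_evenKernel_zero {t : ℝ} (ht : 0 < t) : 1 ≤ evenKernel 0 t := by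
  have h := (hasSum_int_evenKernel₀ 0 ht).nonneg fun n => by split_ifs <;> positivity
  simpa using h

lemma rpow_neg_half_le_evenKernel_zero {t : ℝ} (ht : 0 < t) :
    t ^ (-(1 / 2) : ℝ) ≤ evenKernel 0 t := by
  rw [evenKernel_functional_equation, ← evenKernel_eq_cosKernel_of_zero, one_div (t ^ _),
    ← Real.rpow_neg ht.le]
  exact le_mul_of_one_le_right (by positivity) (one_le_evenKernel_zero (by positivity))

lemma hurwitzEvenFEPair_zero_f_modif_nonneg {t : ℝ} (ht : 0 < t) :
    0 ≤ (hurwitzEvenFEPair 0).f_modif t := by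
  unfold WeakFEPair.f_modif
  rcases lt_trichotomy t 1 with h | rfl | h
  · have hIoi : t ∉ Set.Ioi (1 : ℝ) := h.not_gt
    have hIoo : t ∈ Set.Ioo (0 : ℝ) 1 := ⟨ht, h⟩
    simpa [hIoi, hIoo, hurwitzEvenFEPair, sub_nonneg, ← ofReal_cpow ht.le, ← ofReal_sub]
      using rpow_neg_half_le_evenKernel_zero ht
  · simp
  · have hIoi : t ∈ Set.Ioi (1 : ℝ) := h
    have hIoo : t ∉ Set.Ioo (0 : ℝ) 1 := fun h' => h'.2.not_gt h
    simpa [hIoi, hIoo, hurwitzEvenFEPair, sub_nonneg, ← ofReal_one] using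
      one_le_evenKernel_zero ht

lemma norm_completedRiemannZeta₀_le_add {a b : ℝ} {s : ℂ} (ha : a ≤ s.re) (hb : s.re ≤ b) :
    ‖completedRiemannZeta₀ s‖ ≤ ‖completedRiemannZeta₀ a‖ + ‖completedRiemannZeta₀ b‖ := by
  have hmellin : ∀ z : ℂ, ‖completedRiemannZeta₀ z‖ =
      ‖mellin (hurwitzEvenFEPair 0).f_modif (z / 2)‖ / 2 := fun z => by
    rw [completedRiemannZeta₀, completedHurwitzZetaEven₀, norm_div, Complex.norm_ofNat]
    rfl
  have hconv : ∀ z, MellinConvergent (hurwitzEvenFEPair 0).f_modif z := fun z =>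
    ((hurwitzEvenFEPair 0).isStrongFEPair_toStrongFEPair.hasMellin z).1
  have hle := norm_mellin_le_add (s := s / 2) (fun t => hurwitzEvenFEPair_zero_f_modif_nonneg)
    (hconv (a / 2 : ℝ)) (hconv (b / 2 : ℝ)) (by simpa using by linarith)
    (by simpa using by linarith)
  rw [ofReal_div, ofReal_div, ofReal_ofNat] at hle
  rw [hmellin, hmellin, hmellin]
  linarith

end ThetaKernel

section RiemannXi

open Filter Topology

/-- Riemann's entire function `ξ(s) = s(s - 1)Λ(s) / 2`, encoded through the entire part `Λ₀` of
the completed zeta function `Λ` so that the values at `0` and `1` are the correct ones. -/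
noncomputable def riemannXi (s : ℂ) : ℂ :=
  (s * (s - 1) * completedRiemannZeta₀ s + 1) / 2

lemma differentiable_riemannXi : Differentiable ℂ riemannXi := by
  have := differentiable_completedZeta₀
  unfold riemannXi
  fun_prop

lemma riemannXi_zero : riemannXi 0 = 1 / 2 := by
  simp [riemannXi]

lemma riemannXi_one_sub (s : ℂ) : riemannXi (1 - s) = riemannXi s := by
  rw [riemannXi, riemannXi, completedRiemannZeta₀_one_sub]
  ring

lemma norm_riemannZeta_natCast_le {k : ℕ} (hk : 2 ≤ k) : ‖riemannZeta k‖ ≤ π ^ 2 / 6 := by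
  rw [zeta_nat_eq_tsum_of_gt_one hk]
  refine tsum_of_norm_bounded hasSum_zeta_two fun n => ?_
  rw [norm_div, norm_one, norm_pow, Complex.norm_natCast]
  rcases n.eq_zero_or_pos with rfl | hn
  · simp [(zero_lt_two.trans_le hk).ne']
  · gcongr
    exact_mod_cast hn

lemma norm_Gammaℝ_two_mul_natCast_le {n : ℕ} (hn : n ≠ 0) :
    ‖Gammaℝ (2 * n)‖ ≤ (n : ℝ) ^ n := by
  obtain ⟨m, rfl⟩ := Nat.exists_eq_succ_of_ne_zero hn
  rw [Gammaℝ_def, mul_div_cancel_left₀ _ two_ne_zero, neg_div,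
    mul_div_cancel_left₀ _ two_ne_zero, norm_mul, norm_cpow_eq_rpow_re_of_pos pi_pos,
    Nat.succ_eq_add_one, Nat.cast_succ, Complex.Gamma_nat_eq_factorial, Complex.norm_natCast]
  refine (mul_le_of_le_one_left (by positivity) ?_).trans ?_
  · refine Real.rpow_le_one_of_one_le_of_nonpos (by linarith [pi_gt_three]) ?_
    rw [← Nat.cast_succ, neg_re, natCast_re]
    exact neg_nonpos.2 (Nat.cast_nonneg _)
  · exact_mod_cast (Nat.factorial_le m.le_succ).trans (Nat.factorial_le_pow _)

lemma norm_completedRiemannZeta₀_two_mul_natCast_le {n : ℕ} (hn : n ≠ 0) :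
    ‖completedRiemannZeta₀ (2 * n)‖ ≤ 4 * (n : ℝ) ^ n := by
  have hn1 : (1 : ℝ) ≤ n := by exact_mod_cast Nat.one_le_iff_ne_zero.2 hn
  have hGamma : Gammaℝ (2 * n) ≠ 0 := Gammaℝ_ne_zero_of_re_pos (by simpa using hn.bot_lt)
  have hzeta : ‖riemannZeta (2 * n)‖ ≤ 2 := by
    refine le_trans ?_ (by nlinarith [pi_lt_d2, pi_gt_three] : π ^ 2 / 6 ≤ 2)
    exact_mod_cast norm_riemannZeta_natCast_le (k := 2 * n) (by omega)
  have hsplit : completedRiemannZeta₀ (2 * n) = riemannZeta (2 * n) * Gammaℝ (2 * n) +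
      (1 / (2 * n) + 1 / (1 - 2 * n)) := by
    rw [riemannZeta_def_of_ne_zero (by simpa using hn), div_mul_cancel₀ _ hGamma,
      completedRiemannZeta_eq]
    ring
  have hpoles : ‖(1 / (2 * n) + 1 / (1 - 2 * n) : ℂ)‖ ≤ 2 := by
    have hreal : (1 / (2 * n) + 1 / (1 - 2 * n) : ℂ) =
        ((1 / (2 * n) - 1 / (2 * n - 1) : ℝ) : ℂ) := by
      push_cast
      rw [← neg_sub (2 * n : ℂ) 1, div_neg, ← sub_eq_add_neg]
    have h1 : 1 / (2 * n : ℝ) ≤ 1 := (div_le_one (by linarith)).2 (by linarith)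
    have h2 : 1 / (2 * n - 1 : ℝ) ≤ 1 := (div_le_one (by linarith)).2 (by linarith)
    have h3 : 0 ≤ 1 / (2 * n : ℝ) := by positivity
    have h4 : 0 ≤ 1 / (2 * n - 1 : ℝ) := one_div_nonneg.2 (by linarith)
    rw [hreal, Complex.norm_real, Real.norm_eq_abs, abs_le]
    constructor <;> linarith
  calc ‖completedRiemannZeta₀ (2 * n)‖
      ≤ ‖riemannZeta (2 * n)‖ * ‖Gammaℝ (2 * n)‖ + 2 := by
        rw [hsplit, ← norm_mul]
        exact (norm_add_le _ _).trans (by gcongr)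
    _ ≤ 2 * (n : ℝ) ^ n + 2 * (n : ℝ) ^ n := by
        gcongr
        · exact norm_Gammaℝ_two_mul_natCast_le hn
        · linarith [one_le_pow₀ hn1 (n := n)]
    _ = 4 * (n : ℝ) ^ n := by ring

lemma norm_completedRiemannZeta₀_le {n : ℕ} (hn : n ≠ 0) {s : ℂ} (hs : 1 - 2 * n ≤ s.re)
    (hs' : s.re ≤ 2 * n) : ‖completedRiemannZeta₀ s‖ ≤ 8 * (n : ℝ) ^ n := by
  have hle := norm_completedRiemannZeta₀_le_add hs hs'
  push_cast at hle
  rw [completedRiemannZeta₀_one_sub] at hle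
  linarith [norm_completedRiemannZeta₀_two_mul_natCast_le hn]

lemma norm_riemannXi_le_pow {n : ℕ} {s : ℂ} (hs : 1 + ‖s‖ ≤ n) :
    ‖riemannXi s‖ ≤ 5 * (n : ℝ) ^ (n + 2) := by
  have hn1 : (1 : ℝ) ≤ n := by linarith [norm_nonneg s]
  have hn : n ≠ 0 := by rintro rfl; norm_num at hn1
  have hre := abs_le.1 (abs_re_le_norm s)
  have hpoly : ‖s * (s - 1)‖ ≤ n * n := by
    rw [norm_mul]
    gcongr
    · linarith
    · linarith [norm_sub_le s 1, norm_one (α := ℂ)]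
  have hmul : ‖s * (s - 1) * completedRiemannZeta₀ s‖ ≤ n * n * (8 * (n : ℝ) ^ n) := by
    rw [norm_mul]
    gcongr
    exact norm_completedRiemannZeta₀_le hn (by linarith) (by linarith)
  have hpow : (1 : ℝ) ≤ n ^ (n + 2) := one_le_pow₀ hn1
  rw [riemannXi, norm_div, Complex.norm_ofNat, div_le_iff₀ two_pos]
  calc ‖s * (s - 1) * completedRiemannZeta₀ s + 1‖
      ≤ n * n * (8 * (n : ℝ) ^ n) + 1 := (norm_add_le _ _).trans (by rw [norm_one]; gcongr)
    _ = 8 * (n : ℝ) ^ (n + 2) + 1 := by ring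
    _ ≤ 5 * (n : ℝ) ^ (n + 2) * 2 := by linarith

lemma natCast_pow_add_two_le_exp {n : ℕ} (hn : n ≠ 0) {p : ℝ} (hp : 1 < p) :
    (n : ℝ) ^ (n + 2) ≤ rexp (3 / (p - 1) * (n : ℝ) ^ p) := by
  have hn1 : (1 : ℝ) ≤ n := by exact_mod_cast Nat.one_le_iff_ne_zero.2 hn
  have hn0 : (0 : ℝ) < n := by linarith
  calc (n : ℝ) ^ (n + 2) = rexp ((n + 2) * Real.log n) := by
        rw [← Real.exp_log (pow_pos hn0 _), Real.log_pow]
        push_cast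
        rfl
    _ ≤ rexp (3 * n * ((n : ℝ) ^ (p - 1) / (p - 1))) := by
        gcongr
        · linarith
        · exact Real.log_le_rpow_div hn0.le (by linarith)
    _ = rexp (3 / (p - 1) * (n : ℝ) ^ p) := by
        rw [Real.rpow_sub_one hn0.ne']
        field_simp

lemma hasGrowthExponent_riemannXi {p : ℝ} (hp : 1 < p) : HasGrowthExponent riemannXi p := by
  refine ⟨2 + 3 / (p - 1) * 2 ^ p, fun s => ?_⟩
  set n := ⌈1 + ‖s‖⌉₊
  have hsn : 1 + ‖s‖ ≤ n := Nat.le_ceil _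
  have hn : n ≠ 0 := by
    rintro h
    rw [h, Nat.cast_zero] at hsn
    linarith [norm_nonneg s]
  have hn2 : (n : ℝ) ≤ 2 * (1 + ‖s‖) := by
    linarith [Nat.ceil_lt_add_one (by positivity : 0 ≤ 1 + ‖s‖), norm_nonneg s]
  have hfive : (5 : ℝ) ≤ rexp (2 * (1 + ‖s‖) ^ p) := by
    have h1 : 1 ≤ (1 + ‖s‖) ^ p := Real.one_le_rpow (by simp) (by linarith)
    have h2 : 1 + 2 + 2 ^ 2 / 2 ≤ rexp 2 := Real.quadratic_le_exp_of_nonneg zero_le_two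
    linarith [Real.exp_le_exp.2 (by linarith : 2 ≤ 2 * (1 + ‖s‖) ^ p)]
  calc ‖riemannXi s‖ ≤ 5 * (n : ℝ) ^ (n + 2) := norm_riemannXi_le_pow hsn
    _ ≤ rexp (2 * (1 + ‖s‖) ^ p) * rexp (3 / (p - 1) * (2 * (1 + ‖s‖)) ^ p) := by
        refine mul_le_mul hfive ((natCast_pow_add_two_le_exp hn hp).trans ?_) (by positivity)
          (by positivity)
        have : 0 < p - 1 := by linarith
        gcongr
    _ = rexp ((2 + 3 / (p - 1) * 2 ^ p) * (1 + ‖s‖) ^ p) := by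
        rw [← Real.exp_add, Real.mul_rpow zero_le_two (by positivity)]
        ring_nf

lemma riemannXi_eq_mul_riemannZeta {s : ℂ} (hs : s ≠ 1) (hGamma : Gammaℝ (s + 2) ≠ 0) :
    riemannXi s = π * (s - 1) * Gammaℝ (s + 2) * riemannZeta s := by
  have hπ : (π : ℂ) ≠ 0 := ofReal_ne_zero.2 pi_ne_zero
  rcases eq_or_ne s 0 with rfl | hs0
  · rw [riemannXi_zero, riemannZeta_zero, zero_add, Gammaℝ_def, neg_div, div_self two_ne_zero,
      cpow_neg_one, Complex.Gamma_one]
    field_simp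
    norm_num
  · rw [Gammaℝ_add_two hs0] at hGamma ⊢
    have hGamma' : Gammaℝ s ≠ 0 := by
      rintro h
      simp [h] at hGamma
    have hs1 : 1 - s ≠ 0 := sub_ne_zero.2 hs.symm
    rw [riemannZeta_def_of_ne_zero hs0, completedRiemannZeta_eq, riemannXi]
    field_simp
    ring

lemma riemannXi_eq_zero_iff {s : ℂ} (hs : s ≠ 1) (hGamma : Gammaℝ (s + 2) ≠ 0) :
    riemannXi s = 0 ↔ riemannZeta s = 0 := by
  simp [riemannXi_eq_mul_riemannZeta hs hGamma, hGamma, sub_ne_zero.2 hs, pi_ne_zero]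

lemma riemannXi_ne_zero_of_one_le_re {s : ℂ} (hs : 1 ≤ s.re) : riemannXi s ≠ 0 := by
  rcases eq_or_ne s 1 with rfl | hs1
  · rw [← sub_zero 1, riemannXi_one_sub, riemannXi_zero]
    norm_num
  · rw [Ne, riemannXi_eq_zero_iff hs1
      (Gammaℝ_ne_zero_of_re_pos (by rw [add_re, re_ofNat]; linarith))]
    exact riemannZeta_ne_zero_of_one_le_re hs

lemma preimage_riemannXi_zero : riemannXi ⁻¹' {0} = nontrivialZetaZeros := by
  ext s
  simp only [Set.mem_preimage, Set.mem_singleton_iff, nontrivialZetaZeros, Set.mem_ofPred_eq]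
  by_cases hs : 0 < s.re ∧ s.re < 1
  · have hs1 : s ≠ 1 := by rintro rfl; simp at hs
    rw [riemannXi_eq_zero_iff hs1 (Gammaℝ_ne_zero_of_re_pos (by rw [add_re, re_ofNat]; linarith))]
    exact (and_iff_left hs).symm
  · refine iff_of_false ?_ fun h => hs h.2
    rcases le_or_gt 1 s.re with h1 | h1
    · exact riemannXi_ne_zero_of_one_le_re h1
    · rw [← riemannXi_one_sub]
      refine riemannXi_ne_zero_of_one_le_re ?_
      rw [sub_re, one_re]
      linarith [not_lt.1 fun h0 => hs ⟨h0, h1⟩]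

lemma Gammaℝ_add_two_ne_zero_of_riemannZeta_ne_zero {s : ℂ} (hζ : riemannZeta s ≠ 0) :
    Gammaℝ (s + 2) ≠ 0 := by
  rintro h
  obtain ⟨n, hn⟩ := Gammaℝ_eq_zero_iff.1 h
  refine hζ ?_
  rw [eq_sub_of_add_eq hn, show -(2 * (n : ℂ)) - 2 = -2 * (n + 1) by ring]
  exact riemannZeta_neg_two_mul_nat_add_one n

lemma analyticAt_Gammaℝ {s : ℂ} (hs : Gammaℝ s ≠ 0) : AnalyticAt ℂ Gammaℝ s := by
  rw [← inv_inv Gammaℝ]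
  exact (differentiable_Gammaℝ_inv.analyticAt s).inv (inv_ne_zero hs)

lemma analyticAt_Gammaℝ_add_two {s : ℂ} (hs : Gammaℝ (s + 2) ≠ 0) :
    AnalyticAt ℂ (fun z => Gammaℝ (z + 2)) s :=
  (analyticAt_Gammaℝ hs).fun_comp (f := (· + 2)) (by fun_prop)

lemma logDeriv_Gammaℝ {s : ℂ} (hs : Gammaℝ s ≠ 0) :
    logDeriv Gammaℝ s = -(Real.log π / 2) + 1 / 2 * logDeriv Complex.Gamma (s / 2) := by
  have hπ : (π : ℂ) ≠ 0 := ofReal_ne_zero.2 pi_ne_zero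
  obtain ⟨hpow, hGamma⟩ := mul_ne_zero_iff.1 (Gammaℝ_def s ▸ hs)
  have hGamma_diff : DifferentiableAt ℂ Complex.Gamma (s / 2) :=
    Complex.differentiableAt_Gamma _ fun m hm => hGamma (Complex.Gamma_eq_zero_iff _ |>.2 ⟨m, hm⟩)
  have hpow_deriv : HasDerivAt (fun z : ℂ => (π : ℂ) ^ (-z / 2))
      ((π : ℂ) ^ (-s / 2) * Complex.log π * (-1 / 2)) s :=
    ((hasDerivAt_id s).neg.div_const 2).const_cpow (.inl hπ)
  have hhalf : HasDerivAt (fun z : ℂ => z / 2) (1 / 2) s := (hasDerivAt_id s).div_const 2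
  have hcomp := logDeriv_comp (g := fun z : ℂ => z / 2) hGamma_diff hhalf.differentiableAt
  rw [show Gammaℝ = fun z => (π : ℂ) ^ (-z / 2) * (Complex.Gamma ∘ fun z => z / 2) z from
      funext Gammaℝ_def,
    logDeriv_mul s hpow hGamma hpow_deriv.differentiableAt
      (hGamma_diff.comp s hhalf.differentiableAt), hcomp, hhalf.deriv,
    logDeriv_apply (fun z : ℂ => (π : ℂ) ^ (-z / 2)), hpow_deriv.deriv, ofReal_log pi_pos.le]
  field_simp

lemma riemannXi_eventuallyEq {s : ℂ} (hs : s ≠ 1) (hGamma : Gammaℝ (s + 2) ≠ 0) :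
    riemannXi =ᶠ[𝓝 s] fun z => π * (z - 1) * Gammaℝ (z + 2) * riemannZeta z := by
  filter_upwards [(analyticAt_Gammaℝ_add_two hGamma).continuousAt.eventually_ne hGamma,
    eventually_ne_nhds hs] with z hz hz1
  exact riemannXi_eq_mul_riemannZeta hz1 hz

lemma logDeriv_riemannXi {s : ℂ} (hs : s ≠ 1) (hζ : riemannZeta s ≠ 0) :
    logDeriv riemannXi s = 1 / (s - 1) - Real.log π / 2 +
      1 / 2 * logDeriv Complex.Gamma (s / 2 + 1) + logDeriv riemannZeta s := by
  have hπ : (π : ℂ) ≠ 0 := ofReal_ne_zero.2 pi_ne_zero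
  have hGamma := Gammaℝ_add_two_ne_zero_of_riemannZeta_ne_zero hζ
  have hs1 : (π : ℂ) * (s - 1) ≠ 0 := mul_ne_zero hπ (sub_ne_zero.2 hs)
  have hGamma_diff := (analyticAt_Gammaℝ_add_two hGamma).differentiableAt
  have hlinear : logDeriv (fun z : ℂ => π * (z - 1)) s = 1 / (s - 1) := by
    rw [logDeriv_const_mul _ _ hπ, logDeriv_apply, deriv_sub_const, deriv_id'']
  have hshift : logDeriv (fun z => Gammaℝ (z + 2)) s = logDeriv Gammaℝ (s + 2) := by
    rw [logDeriv_apply, logDeriv_apply, deriv_comp_add_const]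
  rw [(logDeriv_congr_nhds (riemannXi_eventuallyEq hs hGamma)).eq_of_nhds,
    logDeriv_mul (f := fun z => π * (z - 1) * Gammaℝ (z + 2)) s (mul_ne_zero hs1 hGamma) hζ
      (by fun_prop) (differentiableAt_riemannZeta hs),
    logDeriv_mul s hs1 hGamma (by fun_prop) hGamma_diff, hlinear, hshift, logDeriv_Gammaℝ hGamma,
    add_div, div_self two_ne_zero]
  ring

lemma deriv_riemannXi_zero : deriv riemannXi 0 = -completedRiemannZeta₀ 0 / 2 := by
  have hquad : HasDerivAt (fun s : ℂ => s * (s - 1)) (-1) 0 := by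
    simpa using (hasDerivAt_id' (0 : ℂ)).fun_mul ((hasDerivAt_id' (0 : ℂ)).sub_const 1)
  have hξ : HasDerivAt riemannXi _ 0 :=
    ((hquad.mul (differentiable_completedZeta₀ 0).hasDerivAt).add_const 1).div_const 2
  rw [hξ.deriv]
  ring

lemma logDeriv_riemannXi_zero : logDeriv riemannXi 0 = hadamardB := by
  have hlog : Real.log (2 * √π) = Real.log (4 * π) / 2 := by
    rw [← Real.log_sqrt (by positivity), Real.sqrt_mul zero_le_four,
      show (4 : ℝ) = 2 ^ 2 by norm_num, Real.sqrt_sq zero_le_two]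
  have hlog' : Complex.log (4 * π) = Real.log (4 * π) := by
    rw [ofReal_log (by positivity), ofReal_mul, ofReal_ofNat]
  rw [logDeriv_apply, deriv_riemannXi_zero, riemannXi_zero, completedRiemannZeta₀_zero, hadamardB,
    hlog, hlog']
  push_cast
  ring

lemma analyticOrderNatAt_riemannXi {s : ℂ} (hs : s ≠ 1) (hGamma : Gammaℝ (s + 2) ≠ 0) :
    analyticOrderNatAt riemannXi s = analyticOrderNatAt riemannZeta s := by
  have hfactor : AnalyticAt ℂ (fun z => π * (z - 1) * Gammaℝ (z + 2)) s :=
    (by fun_prop : AnalyticAt ℂ (fun z : ℂ => π * (z - 1)) s).mul (analyticAt_Gammaℝ_add_two hGamma)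
  have hfactor_ne : π * (s - 1) * Gammaℝ (s + 2) ≠ 0 :=
    mul_ne_zero (mul_ne_zero (ofReal_ne_zero.2 pi_ne_zero) (sub_ne_zero.2 hs)) hGamma
  have hmul := analyticOrderAt_mul hfactor (analyticOn_riemannZeta s hs)
  rw [hfactor.analyticOrderAt_eq_zero.2 hfactor_ne, zero_add] at hmul
  exact congrArg ENat.toNat ((analyticOrderAt_congr (riemannXi_eventuallyEq hs hGamma)).trans hmul)

lemma zetaZeroOrder_eq_analyticOrderNatAt_riemannXi {ρ : ℂ} (hρ : ρ ∈ nontrivialZetaZeros) :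
    zetaZeroOrder ρ = analyticOrderNatAt riemannXi ρ := by
  have hρ1 : ρ ≠ 1 := by
    rintro rfl
    exact riemannZeta_one_ne_zero hρ.1
  have hGamma : Gammaℝ (ρ + 2) ≠ 0 :=
    Gammaℝ_ne_zero_of_re_pos (by rw [add_re, re_ofNat]; linarith [hρ.2.1])
  rw [analyticOrderNatAt_riemannXi hρ1 hGamma,
    zetaZeroOrder, sInf_iteratedDeriv_ne_zero_eq_analyticOrderNatAt (analyticOn_riemannZeta ρ hρ1)]

lemma hasSum_logDeriv_riemannXi {s : ℂ} (hs : riemannXi s ≠ 0) :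
    HasSum (fun ρ : nontrivialZetaZeros => (zetaZeroOrder ρ : ℂ) * (1 / (s - ρ) + 1 / (ρ : ℂ)))
      (logDeriv riemannXi s - hadamardB) := by
  have h := (hasGrowthExponent_riemannXi (p := 3 / 2) (by norm_num)).hasSum_logDeriv
    differentiable_riemannXi (by simp [riemannXi_zero]) (by norm_num) (by norm_num) hs
  rw [preimage_riemannXi_zero, logDeriv_riemannXi_zero] at h
  simpa only [zetaZeroOrder_eq_analyticOrderNatAt_riemannXi (Subtype.prop _)] using h

end RiemannXi

/-- the partial fraction (Hadamard product) expansion of `ζ'/ζ`: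
for `s ≠ 1` with `ζ(s) ≠ 0`,
`-ζ'(s)/ζ(s) = 1/(s-1) - B - (1/2)·log π + (1/2)·Γ'(s/2+1)/Γ(s/2+1)
  - Σ_ρ m_ρ (1/(s-ρ) + 1/ρ)`, the sum over nontrivial zeros converging absolutely. -/
theorem hadamard_expansion_zeta_log_deriv (s : ℂ) (hs : s ≠ 1) (hζ : riemannZeta s ≠ 0) :
    Summable (fun ρ : nontrivialZetaZeros =>
      ‖(zetaZeroOrder ρ : ℂ) * (1 / (s - (ρ : ℂ)) + 1 / (ρ : ℂ))‖) ∧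
    -(deriv riemannZeta s / riemannZeta s) =
      1 / (s - 1) - (hadamardB : ℂ) - (1 / 2) * (Real.log Real.pi : ℂ) +
        (1 / 2) * (deriv Complex.Gamma (s / 2 + 1) / Complex.Gamma (s / 2 + 1)) -
        ∑' ρ : nontrivialZetaZeros,
          (zetaZeroOrder ρ : ℂ) * (1 / (s - (ρ : ℂ)) + 1 / (ρ : ℂ)) := by
  have hξ : riemannXi s ≠ 0 := by
    rwa [Ne, riemannXi_eq_zero_iff hs (Gammaℝ_add_two_ne_zero_of_riemannZeta_ne_zero hζ)]
  have hsum := hasSum_logDeriv_riemannXi hξ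
  refine ⟨hsum.summable.norm, ?_⟩
  rw [hsum.tsum_eq, logDeriv_riemannXi hs hζ, logDeriv_apply, logDeriv_apply]
  ring
end

section
/- Let X be the Dirichlet character modulo 5 with X(2) = i, let X̄ be its conjugate character, let κ = (√(10 − 2√5) − 2)/(√5 − 1), and define the Davenport–Heilbronn function D(s) = ((1 − iκ)/2)·L(s, X) + ((1 + iκ)/2)·L(s, X̄). Then for every complex s such that neither (1+s)/2 nor (2−s)/2 is a non-positive integer, one has (π/5)^{−s/2}·Γ((1+s)/2)·D(s) = (π/5)^{−(1−s)/2}·Γ((2−s)/2)·D(1−s). -/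
open Complex Real

/-- The constant `κ = (√(10 − 2√5) − 2)/(√5 − 1)` in the Davenport–Heilbronn function. -/
noncomputable def dhKappa : ℝ :=
  (Real.sqrt (10 - 2 * Real.sqrt 5) - 2) / (Real.sqrt 5 - 1)

/-- The Davenport–Heilbronn function built from a Dirichlet character `X` mod 5:
`D(s) = ((1 − iκ)/2)·L(s, X) + ((1 + iκ)/2)·L(s, X̄)`, where `X̄` is the conjugate character. -/
noncomputable def dhFunction (X : DirichletCharacter ℂ 5) (s : ℂ) : ℂ :=
  ((1 - Complex.I * dhKappa) / 2) * X.LFunction s +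
    ((1 + Complex.I * dhKappa) / 2) * DirichletCharacter.LFunction (X.ringHomComp (starRingEnd ℂ)) s

/-!
The functional equation of an odd primitive character `χ` modulo `N` has the form
`G(s) L(s, χ) = ε(χ) G(1 - s) L(1 - s, χ⁻¹)` with `G(s) = (π/N)^(-s/2) Γ((1+s)/2)` and `ε(χ)` the
root number. It therefore exchanges the two terms of `a L(s, χ) + b L(s, χ⁻¹)` as soon as
`b = a ε(χ)`. For `X` modulo 5 with `X(2) = i` the Gauss sum gives
`ε(X) = (2/√5) (sin (2π/5) + i sin (π/5))`, and `κ` is exactly the real number for which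
`1 + iκ = (1 - iκ) ε(X)`.
-/

section Characters

variable {R : Type*} [CommRing R] {N : ℕ} {χ : DirichletCharacter R N}

lemma dirichletCharacter_ne_one_of_odd [NeZero (2 : R)] (hχ : χ.Odd) : χ ≠ 1 := by
  rintro rfl
  exact DirichletCharacter.Odd.not_even _ hχ (MulChar.one_apply isUnit_one.neg)

lemma dirichletCharacter_level_ne_one_of_odd [NeZero (2 : R)] (hχ : χ.Odd) : N ≠ 1 := by
  rintro rfl
  exact dirichletCharacter_ne_one_of_odd hχ χ.level_one

lemma dirichletCharacter_odd_inv (hχ : χ.Odd) : χ⁻¹.Odd := by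
  rwa [DirichletCharacter.Odd, MulChar.inv_apply, ← Units.val_one, ← Units.val_neg,
    Ring.inverse_unit, inv_neg, inv_one]

lemma dirichletCharacter_isPrimitive_of_prime {S : Type*} [CommMonoidWithZero S] {p : ℕ}
    (hp : p.Prime) {ψ : DirichletCharacter S p} (hψ : ψ ≠ 1) : ψ.IsPrimitive := by
  have : NeZero p := ⟨hp.ne_zero⟩
  exact ((Nat.dvd_prime hp).mp ψ.conductor_dvd_level).resolve_left
    (mt ψ.eq_one_iff_conductor_eq_one.mpr hψ)

end Characters

section OddGaussSum

lemma gaussSum_eq_I_mul_sum_im_of_apply_neg_one {R : Type*} [CommRing R] [Fintype R]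
    {χ : MulChar R ℂ} (hχ : χ (-1) = -1) (ψ : AddChar R ℂ) :
    gaussSum χ ψ = I * ∑ a, χ a * (ψ a).im := by
  have hneg : gaussSum χ ψ = -gaussSum χ ψ⁻¹ := by
    rw [AddChar.inv_mulShift, ← neg_one_mul, ← hχ]
    exact (gaussSum_mulShift χ ψ (-1)).symm
  have hdiff : gaussSum χ ψ - gaussSum χ ψ⁻¹ = 2 * (I * ∑ a, χ a * (ψ a).im) := by
    simp only [gaussSum, ← Finset.sum_sub_distrib, Finset.mul_sum]
    refine Finset.sum_congr rfl fun a _ ↦ ?_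
    rw [AddChar.inv_apply, AddChar.map_neg_eq_conj, ← mul_sub, Complex.sub_conj]
    push_cast
    ring
  linear_combination hneg / 2 + hdiff / 2

variable {N : ℕ} [NeZero N]

lemma stdAddChar_intCast_im (j : ℤ) :
    (ZMod.stdAddChar (j : ZMod N)).im = Real.sin (2 * π * j / N) := by
  have harg : 2 * (π : ℂ) * I * j / N = ((2 * π * j / N : ℝ) : ℂ) * I := by
    push_cast
    ring
  rw [ZMod.stdAddChar_coe, harg, Complex.exp_ofReal_mul_I_im]

lemma rootNumber_eq_sum_im_of_odd {χ : DirichletCharacter ℂ N} (hχ : χ.Odd) :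
    χ.rootNumber = (∑ a, χ a * (ZMod.stdAddChar a).im) / (√N : ℝ) := by
  have hsqrt : (N : ℂ) ^ (1 / 2 : ℂ) = (√N : ℝ) := by
    rw [Real.sqrt_eq_rpow, Complex.ofReal_cpow N.cast_nonneg]
    norm_num
  rw [DirichletCharacter.rootNumber, if_neg hχ.not_even, pow_one, hsqrt,
    gaussSum_eq_I_mul_sum_im_of_apply_neg_one hχ, mul_div_cancel_left₀ _ I_ne_zero]

end OddGaussSum

section FunctionalEquation

/-- The factor `(π/N)^(-s/2) Γ((1+s)/2)` completing the `L`-function of an odd Dirichlet character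
modulo `N`, normalised as in the Davenport–Heilbronn functional equation. It differs from
`DirichletCharacter.gammaFactor` by `N^(s/2) √π`. -/
noncomputable def oddCompletingFactor (N : ℕ) (s : ℂ) : ℂ :=
  ((π : ℂ) / N) ^ (-s / 2) * Complex.Gamma ((1 + s) / 2)

lemma oddCompletingFactor_eq_mul_Gammaℝ (N : ℕ) (s : ℂ) :
    oddCompletingFactor N s = (N : ℂ) ^ (s / 2) * (π : ℂ) ^ (1 / 2 : ℂ) * Gammaℝ (s + 1) := by
  have hπ : (π : ℂ) ≠ 0 := ofReal_ne_zero.mpr Real.pi_ne_zero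
  have hdiv : ((π : ℂ) / N) ^ (-s / 2) = (N : ℂ) ^ (s / 2) * (π : ℂ) ^ (-s / 2) := by
    rw [← ofReal_natCast, Complex.div_cpow_ofReal_nonneg Real.pi_pos.le N.cast_nonneg, neg_div,
      Complex.cpow_neg (N : ℝ), div_inv_eq_mul, mul_comm]
  have hexp : (π : ℂ) ^ (-s / 2) = (π : ℂ) ^ (1 / 2 : ℂ) * (π : ℂ) ^ (-(s + 1) / 2) := by
    rw [← Complex.cpow_add _ _ hπ]
    ring_nf
  rw [oddCompletingFactor, Gammaℝ_def, hdiv, hexp, add_comm 1 s]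
  ring

variable {N : ℕ} [NeZero N] {χ : DirichletCharacter ℂ N} {s : ℂ}

/- `Complex.Gamma` takes the value `0` at its poles and nowhere else, so `hs` excludes exactly the
poles. -/
lemma oddCompletingFactor_mul_LFunction (hχ : χ.Odd) (hs : Complex.Gamma ((1 + s) / 2) ≠ 0) :
    oddCompletingFactor N s * χ.LFunction s =
      (N : ℂ) ^ (s / 2) * (π : ℂ) ^ (1 / 2 : ℂ) * χ.completedLFunction s := by
  have hπ : (π : ℂ) ≠ 0 := ofReal_ne_zero.mpr Real.pi_ne_zero
  have hΓ : Gammaℝ (s + 1) ≠ 0 := by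
    rw [Gammaℝ_def, add_comm s 1]
    exact mul_ne_zero (by simp [Complex.cpow_eq_zero_iff, hπ]) hs
  have hN : N ≠ 1 := dirichletCharacter_level_ne_one_of_odd hχ
  rw [χ.LFunction_eq_completed_div_gammaFactor s (.inr hN), hχ.gammaFactor_def,
    oddCompletingFactor_eq_mul_Gammaℝ, mul_assoc _ (Gammaℝ _), mul_div_cancel₀ _ hΓ]

lemma oddCompletingFactor_mul_LFunction_eq_rootNumber_mul (hodd : χ.Odd) (hprim : χ.IsPrimitive)
    (hs : Complex.Gamma ((1 + s) / 2) ≠ 0) (hs' : Complex.Gamma ((2 - s) / 2) ≠ 0) :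
    oddCompletingFactor N s * χ.LFunction s =
      χ.rootNumber * (oddCompletingFactor N (1 - s) * χ⁻¹.LFunction (1 - s)) := by
  have hfe : χ.completedLFunction s =
      (N : ℂ) ^ (1 / 2 - s) * χ.rootNumber * χ⁻¹.completedLFunction (1 - s) := by
    simpa only [sub_sub_cancel, show 1 - s - 1 / 2 = 1 / 2 - s by ring] using
      hprim.completedLFunction_one_sub (1 - s)
  have hpow : (N : ℂ) ^ ((1 - s) / 2) = (N : ℂ) ^ (s / 2) * (N : ℂ) ^ (1 / 2 - s) := by
    rw [← Complex.cpow_add _ _ (NeZero.ne _)]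
    ring_nf
  rw [show 2 - s = 1 + (1 - s) by ring] at hs'
  rw [oddCompletingFactor_mul_LFunction hodd hs,
    oddCompletingFactor_mul_LFunction (dirichletCharacter_odd_inv hodd) hs', hfe, hpow]
  ring

theorem selfDual_functional_equation_of_eq_mul_rootNumber (hodd : χ.Odd) (hprim : χ.IsPrimitive)
    {a b : ℂ} (hab : b = a * χ.rootNumber)
    (hs : Complex.Gamma ((1 + s) / 2) ≠ 0) (hs' : Complex.Gamma ((2 - s) / 2) ≠ 0) :
    oddCompletingFactor N s * (a * χ.LFunction s + b * χ⁻¹.LFunction s) =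
      oddCompletingFactor N (1 - s) * (a * χ.LFunction (1 - s) + b * χ⁻¹.LFunction (1 - s)) := by
  have hfe := oddCompletingFactor_mul_LFunction_eq_rootNumber_mul hodd hprim hs hs'
  have hfe' : oddCompletingFactor N (1 - s) * χ.LFunction (1 - s) =
      χ.rootNumber * (oddCompletingFactor N s * χ⁻¹.LFunction s) := by
    have := oddCompletingFactor_mul_LFunction_eq_rootNumber_mul (s := 1 - s) hodd hprim
      (by rwa [show 1 + (1 - s) = 2 - s by ring]) (by rwa [show 2 - (1 - s) = 1 + s by ring])
    rwa [sub_sub_cancel] at this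
  rw [hab]
  linear_combination a * hfe - a * hfe'

end FunctionalEquation

section ModFive

lemma sin_pi_div_five_sq : Real.sin (π / 5) ^ 2 = (5 - √5) / 8 := by
  rw [Real.sin_sq, Real.cos_pi_div_five]
  linear_combination -Real.sq_sqrt (Nat.ofNat_nonneg 5) / 16

lemma sqrt_ten_sub_eq_four_mul_sin_pi_div_five : √(10 - 2 * √5) = 4 * Real.sin (π / 5) := by
  have hnonneg : 0 ≤ Real.sin (π / 5) :=
    Real.sin_nonneg_of_nonneg_of_le_pi (by positivity) (by linarith [Real.pi_pos])
  rw [← Real.sqrt_sq (mul_nonneg zero_le_four hnonneg), mul_pow, sin_pi_div_five_sq]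
  ring_nf

lemma sin_two_pi_div_five : Real.sin (2 * π / 5) = (1 + √5) / 2 * Real.sin (π / 5) := by
  rw [mul_div_assoc, Real.sin_two_mul, Real.cos_pi_div_five]
  ring

lemma sqrt_five_sub_one_ne_zero : √5 - 1 ≠ 0 :=
  sub_ne_zero.mpr (by norm_num)

lemma dhKappa_mul_sqrt_five_sub_one : dhKappa * (√5 - 1) = 4 * Real.sin (π / 5) - 2 := by
  rw [dhKappa, div_mul_cancel₀ _ sqrt_five_sub_one_ne_zero,
    sqrt_ten_sub_eq_four_mul_sin_pi_div_five]

/- Up to the factor `√5 / 2`, the next two identities are the real and imaginary parts of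
`(1 - iκ) ε(X) = 1 + iκ`. -/
lemma sin_two_pi_div_five_add_dhKappa_mul_sin :
    Real.sin (2 * π / 5) + dhKappa * Real.sin (π / 5) = √5 / 2 := by
  apply mul_right_cancel₀ sqrt_five_sub_one_ne_zero
  rw [sin_two_pi_div_five]
  linear_combination Real.sin (π / 5) * dhKappa_mul_sqrt_five_sub_one + 4 * sin_pi_div_five_sq +
    (Real.sin (π / 5) - 1) / 2 * Real.sq_sqrt (Nat.ofNat_nonneg 5)

lemma sin_pi_div_five_sub_dhKappa_mul_sin :
    Real.sin (π / 5) - dhKappa * Real.sin (2 * π / 5) = dhKappa * (√5 / 2) := by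
  apply mul_right_cancel₀ sqrt_five_sub_one_ne_zero
  rw [sin_two_pi_div_five]
  linear_combination (-(1 + √5) / 2 * Real.sin (π / 5) - √5 / 2) * dhKappa_mul_sqrt_five_sub_one -
    2 * (1 + √5) * sin_pi_div_five_sq + Real.sq_sqrt (Nat.ofNat_nonneg 5) / 4

lemma rootNumber_of_odd_mod_five {χ : DirichletCharacter ℂ 5} (hχ : χ.Odd) :
    χ.rootNumber = 2 * (Real.sin (2 * π / 5) + χ 2 * Real.sin (π / 5)) / (√5 : ℝ) := by
  have him_one : (ZMod.stdAddChar (1 : ZMod 5)).im = Real.sin (2 * π / 5) := by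
    simpa using stdAddChar_intCast_im (N := 5) 1
  have him_two : (ZMod.stdAddChar (2 : ZMod 5)).im = Real.sin (π / 5) := by
    rw [← Real.sin_pi_sub]
    convert! stdAddChar_intCast_im (N := 5) 2 using 2
    push_cast
    ring
  have him_neg (a : ZMod 5) : (ZMod.stdAddChar (-a)).im = -(ZMod.stdAddChar a).im := by
    rw [AddChar.map_neg_eq_conj, Complex.conj_im]
  have hsum : ∑ a, χ a * (ZMod.stdAddChar a).im =
      χ 0 * (ZMod.stdAddChar (0 : ZMod 5)).im + χ 1 * (ZMod.stdAddChar (1 : ZMod 5)).im +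
      χ 2 * (ZMod.stdAddChar (2 : ZMod 5)).im + χ (-2) * (ZMod.stdAddChar (-2 : ZMod 5)).im +
      χ (-1) * (ZMod.stdAddChar (-1 : ZMod 5)).im :=
    -- `ZMod 5` unfolds to `Fin 5`, where `-2` and `-1` evaluate to `3` and `4`.
    Fin.sum_univ_five fun a : ZMod 5 ↦ χ a * ((ZMod.stdAddChar a).im : ℂ)
  rw [rootNumber_eq_sum_im_of_odd hχ, hsum, him_neg, him_neg, him_one, him_two, hχ.eval_neg,
    hχ.eval_neg, map_one, χ.map_zero' (by norm_num)]
  push_cast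
  ring

lemma odd_of_apply_two_sq {R : Type*} [CommRing R] {χ : DirichletCharacter R 5}
    (hχ : χ 2 ^ 2 = -1) : χ.Odd := by
  rw [DirichletCharacter.Odd, show (-1 : ZMod 5) = 2 ^ 2 by decide, map_pow, hχ]

lemma one_add_I_mul_dhKappa {X : DirichletCharacter ℂ 5} (hX : X 2 = I) :
    1 + I * dhKappa = (1 - I * dhKappa) * X.rootNumber := by
  have hr : ((√5 : ℝ) : ℂ) ≠ 0 := ofReal_ne_zero.mpr (by positivity)
  have hre := congrArg ((↑) : ℝ → ℂ) sin_two_pi_div_five_add_dhKappa_mul_sin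
  have him := congrArg ((↑) : ℝ → ℂ) sin_pi_div_five_sub_dhKappa_mul_sin
  rw [rootNumber_of_odd_mod_five (odd_of_apply_two_sq (hX ▸ I_sq)), hX, mul_div_assoc',
    eq_div_iff hr]
  generalize Real.sin (2 * π / 5) = b, Real.sin (π / 5) = a at *
  push_cast at hre him ⊢
  linear_combination -2 * hre - 2 * I * him + 2 * dhKappa * a * I_sq

end ModFive

/-- the self-dual functional equation of the Davenport–Heilbronn function:
for the character `X` mod 5 with `X(2) = i` and all `s` such that neither `(1+s)/2` nor
`(2−s)/2` is a non-positive integer,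
`(π/5)^{−s/2}·Γ((1+s)/2)·D(s) = (π/5)^{−(1−s)/2}·Γ((2−s)/2)·D(1−s)`. -/
theorem dh_functional_equation (X : DirichletCharacter ℂ 5) (hX : X 2 = Complex.I) :
    ∀ s : ℂ, (¬ ∃ n : ℕ, (1 + s) / 2 = -(n : ℂ)) → (¬ ∃ n : ℕ, (2 - s) / 2 = -(n : ℂ)) →
      ((Real.pi : ℂ) / 5) ^ (-s / 2) * Complex.Gamma ((1 + s) / 2) * dhFunction X s =
        ((Real.pi : ℂ) / 5) ^ (-(1 - s) / 2) * Complex.Gamma ((2 - s) / 2) *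
          dhFunction X (1 - s) := by
  intro s hs hs'
  have hodd : X.Odd := odd_of_apply_two_sq (hX ▸ I_sq)
  have hprim : X.IsPrimitive :=
    dirichletCharacter_isPrimitive_of_prime Nat.prime_five (dirichletCharacter_ne_one_of_odd hodd)
  have hcoeff : (1 + I * dhKappa) / 2 = (1 - I * dhKappa) / 2 * X.rootNumber := by
    rw [one_add_I_mul_dhKappa hX, mul_div_right_comm]
  have hconj : X.ringHomComp (starRingEnd ℂ) = X⁻¹ := MulChar.star_eq_inv X
  have hfe := selfDual_functional_equation_of_eq_mul_rootNumber hodd hprim hcoeff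
    (Complex.Gamma_ne_zero (not_exists.mp hs)) (Complex.Gamma_ne_zero (not_exists.mp hs'))
  simpa only [oddCompletingFactor, dhFunction, hconj, Nat.cast_ofNat,
    show 1 + (1 - s) = 2 - s by ring] using hfe
end

section
/- Let X be the Dirichlet character modulo 5 with X(2) = i, κ = (√(10 − 2√5) − 2)/(√5 − 1), and D(s) = ((1 − iκ)/2)·L(s, X) + ((1 + iκ)/2)·L(s, X̄) the Davenport–Heilbronn function. Then there exists a complex number s with D(s) = 0, 0.8085 < Re s < 0.8086, and 85.6993 < Im s < 85.6994; in particular D has a zero s with 1/2 < Re s < 1, so the analogue of the Riemann Hypothesis fails for D. -/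
open Complex Real

/-!
Write `D` as the Dirichlet series with the `5`-periodic coefficients `0, 1, κ, -κ, -1`. Adding to a
partial sum the first two terms of the Euler–Maclaurin expansion of its tail makes every further
block of five terms contribute `O(y ^ (-Re s - 5))`, so the corrected sums converge locally
uniformly on `Re s > 0` and represent `D` there with an explicit error.

On a small disc around an approximate zero, `D` is then within `ε` of a linear function
`(s - c) * d` with `4 * ε < r * ‖d‖`, and the open mapping theorem produces a zero in the disc.
The value and the slope at `c` are finite sums of `2000` terms, enclosed in integer ball arithmetic
that the kernel evaluates.
-/

open Metric in
theorem exists_zero_of_norm_sub_linear_le {f : ℂ → ℂ} {c d : ℂ} {r ε : ℝ} (hr : 0 < r)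
    (hf : DiffContOnCl ℂ f (ball c r)) (hε : 4 * ε < r * ‖d‖)
    (hlin : ∀ z ∈ closedBall c r, ‖f z - (z - c) * d‖ ≤ ε) : ∃ z ∈ closedBall c r, f z = 0 := by
  have hc : ‖f c‖ ≤ ε := by simpa using hlin c (mem_closedBall_self hr.le)
  have hsphere : ∀ z ∈ sphere c r, r * ‖d‖ - 2 * ε ≤ ‖f z - f c‖ := by
    intro z hz
    have hz' : ‖(z - c) * d‖ = r * ‖d‖ := by rw [norm_mul, mem_sphere_iff_norm.1 hz]
    have hlinz := hlin z (sphere_subset_closedBall hz)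
    have htri : ‖(z - c) * d‖ ≤ ‖f z - f c‖ + ‖f c‖ + ‖f z - (z - c) * d‖ := by
      calc ‖(z - c) * d‖ = ‖f z - f c + f c - (f z - (z - c) * d)‖ := by congr 1; ring
        _ ≤ _ := (norm_sub_le _ _).trans (by gcongr; exact norm_add_le _ _)
    linarith
  have hne : ∃ᶠ z in nhds c, f z ≠ f c := by
    rw [Filter.Frequently]
    intro hconst
    replace hconst : f =ᶠ[nhds c] fun _ => f c := hconst.mono fun z hz => not_not.1 hz
    have hball : Set.EqOn f (fun _ => f c) (ball c r) :=
      (hf.differentiableOn.analyticOnNhd isOpen_ball).eqOn_of_preconnected_of_eventuallyEq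
        analyticOnNhd_const (convex_ball c r).isPreconnected (mem_ball_self hr) hconst
    have hclosure := hball.of_subset_closure hf.continuousOn continuousOn_const
      subset_closure subset_rfl
    rw [closure_ball c hr.ne'] at hclosure
    have hmem : c + r ∈ sphere c r := by simp [abs_of_pos hr]
    have hgap := hsphere _ hmem
    rw [hclosure (sphere_subset_closedBall hmem), sub_self, norm_zero] at hgap
    linarith [norm_nonneg (f c)]
  have hzero : (0 : ℂ) ∈ ball (f c) ((r * ‖d‖ - 2 * ε) / 2) := by
    rw [mem_ball, dist_zero_left]
    linarith
  exact hf.ball_subset_image_closedBall hr hsphere hne hzero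

section PowerSums

theorem one_div_add_one_pow_succ_le {x : ℝ} (hx : 0 < x) {p : ℕ} (hp : p ≠ 0) :
    1 / (x + 1) ^ (p + 1) ≤ 1 / p * (1 / x ^ p - 1 / (x + 1) ^ p) := by
  have bernoulli : 1 + p * (1 / x) ≤ ((x + 1) / x) ^ p := by
    have h := one_add_mul_le_pow (a := 1 / x) (by linarith [one_div_pos.2 hx]) p
    rwa [show (x + 1) / x = 1 + 1 / x by field_simp]
  have hmono : 1 + p * (1 / (x + 1)) ≤ ((x + 1) / x) ^ p := by
    refine le_trans ?_ bernoulli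
    gcongr
    linarith
  rw [div_pow] at hmono
  calc 1 / (x + 1) ^ (p + 1)
      = 1 / p * (1 / (x + 1) ^ p * (1 + p * (1 / (x + 1)) - 1)) := by field_simp; ring
    _ ≤ 1 / p * (1 / (x + 1) ^ p * ((x + 1) ^ p / x ^ p - 1)) := by gcongr
    _ = 1 / p * (1 / x ^ p - 1 / (x + 1) ^ p) := by field_simp

theorem tsum_one_div_add_one_add_pow_succ_le {x : ℝ} (hx : 0 < x) {p : ℕ} (hp : p ≠ 0) :
    ∑' i : ℕ, 1 / (x + 1 + i) ^ (p + 1) ≤ 1 / (p * x ^ p) := by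
  have hpartial (k : ℕ) : ∑ i ∈ Finset.range k, 1 / (x + 1 + i) ^ (p + 1) ≤
      1 / p * (1 / x ^ p - 1 / (x + k) ^ p) := by
    induction k with
    | zero => simp
    | succ k ih =>
      have hstep := one_div_add_one_pow_succ_le (x := x + k) (by positivity) hp
      rw [Finset.sum_range_succ, add_right_comm x 1, Nat.cast_succ, ← add_assoc]
      linarith
  refine Real.tsum_le_of_sum_range_le (fun i => by positivity) fun k => (hpartial k).trans ?_
  rw [← one_div_mul_one_div]
  gcongr
  exact sub_le_self _ (by positivity)

theorem summable_one_div_add_one_add_pow (M : ℕ) {p : ℕ} (hp : 1 < p) :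
    Summable fun i : ℕ => 1 / ((M : ℝ) + 1 + i) ^ p := by
  have h := (summable_nat_add_iff (M + 1)).2 (Real.summable_one_div_nat_pow.2 hp)
  refine h.congr fun i => ?_
  push_cast
  rw [add_comm (i : ℝ)]

theorem sum_range_one_div_sqrt_le (n : ℕ) :
    ∑ i ∈ Finset.range (n + 1), 1 / √(i : ℝ) ≤ 2 * √n := by
  induction n with
  | zero => simp
  | succ n ih =>
    have hpos : 0 < √((n + 1 : ℕ) : ℝ) := Real.sqrt_pos.2 (by positivity)
    have hmono : √(n : ℝ) ≤ √((n + 1 : ℕ) : ℝ) := Real.sqrt_le_sqrt (by simp)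
    have hsq : √((n + 1 : ℕ) : ℝ) ^ 2 - √(n : ℝ) ^ 2 = 1 := by
      rw [Real.sq_sqrt (by positivity), Real.sq_sqrt (by positivity)]
      push_cast
      ring
    have hstep : 1 / √((n + 1 : ℕ) : ℝ) ≤ 2 * (√((n + 1 : ℕ) : ℝ) - √n) := by
      rw [div_le_iff₀ hpos]
      nlinarith
    rw [Finset.sum_range_succ]
    linarith

end PowerSums

theorem norm_cpow_neg_sub_linear_le {x : ℝ} (hx : 0 < x) (s z : ℂ)
    (h : ‖z - s‖ * |Real.log x| ≤ 1) :
    ‖(x : ℂ) ^ (-z) - (x : ℂ) ^ (-s) * (1 - (z - s) * Real.log x)‖ ≤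
      ‖(x : ℂ) ^ (-s)‖ * (‖z - s‖ * |Real.log x|) ^ 2 := by
  have hx0 : (x : ℂ) ≠ 0 := ofReal_ne_zero.2 hx.ne'
  set w : ℂ := -((z - s) * Real.log x)
  have hw : ‖w‖ = ‖z - s‖ * |Real.log x| := by
    rw [norm_neg, norm_mul, norm_real, Real.norm_eq_abs]
  have hcpow : (x : ℂ) ^ (-z) = (x : ℂ) ^ (-s) * Complex.exp w := by
    rw [cpow_def_of_ne_zero hx0, cpow_def_of_ne_zero hx0, ← Complex.exp_add, ← ofReal_log hx.le]
    congr 1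
    ring
  calc ‖(x : ℂ) ^ (-z) - (x : ℂ) ^ (-s) * (1 - (z - s) * Real.log x)‖
      = ‖(x : ℂ) ^ (-s)‖ * ‖Complex.exp w - 1 - w‖ := by
        rw [hcpow, ← norm_mul]
        congr 1
        ring
    _ ≤ ‖(x : ℂ) ^ (-s)‖ * ‖w‖ ^ 2 := by
        gcongr
        exact norm_exp_sub_one_sub_id_le (hw.trans_le h)
    _ = _ := by rw [hw]

section Taylor

/-- The remainder of order `K` in the Taylor expansion of `h ↦ (x + h) ^ (-s)` at `h = 0`. -/
noncomputable def cpowTaylorRemainder (K : ℕ) (s : ℂ) (x h : ℝ) : ℂ :=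
  ((x + h : ℝ) : ℂ) ^ (-s) - ∑ j ∈ Finset.range K,
    (-1) ^ j * (ascPochhammer ℂ j).eval s / j.factorial * (x : ℂ) ^ (-(s + j)) * (h : ℂ) ^ j

theorem ascPochhammer_succ_eval_left {R : Type*} [CommSemiring R] (s : R) (K : ℕ) :
    (ascPochhammer R (K + 1)).eval s = s * (ascPochhammer R K).eval (s + 1) := by
  simp [ascPochhammer_succ_left]

theorem cpowTaylorRemainder_succ_zero (K : ℕ) (s : ℂ) (x : ℝ) :
    cpowTaylorRemainder (K + 1) s x 0 = 0 := by
  simp [cpowTaylorRemainder, Finset.sum_range_succ']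

theorem hasDerivAt_cpowTaylorRemainder (K : ℕ) (s : ℂ) {x h : ℝ} (hx : 0 < x + h) :
    HasDerivAt (cpowTaylorRemainder (K + 1) s x) (-s * cpowTaylorRemainder K (s + 1) x h) h := by
  have hpow : HasDerivAt (fun h : ℝ => ((x + h : ℝ) : ℂ) ^ (-s))
      (-s * ((x + h : ℝ) : ℂ) ^ (-(s + 1))) h := by
    have hslit : (x : ℂ) + (h : ℂ) ∈ slitPlane := by
      rw [← ofReal_add]
      exact ofReal_mem_slitPlane.2 hx
    have := (((hasDerivAt_id (h : ℂ)).const_add (x : ℂ)).cpow_const (c := -s) hslit).comp_ofReal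
    simp only [ofReal_add]
    refine this.congr_deriv ?_
    rw [mul_one, neg_add' s 1, id]
  have hterm (j : ℕ) := ((hasDerivAt_pow j (h : ℂ)).comp_ofReal).const_mul
    ((-1) ^ j * (ascPochhammer ℂ j).eval s / j.factorial * (x : ℂ) ^ (-(s + j)))
  refine (hpow.sub (HasDerivAt.fun_sum fun j _ => hterm j)).congr_deriv ?_
  rw [Finset.sum_range_succ', cpowTaylorRemainder, mul_sub, Finset.mul_sum]
  simp only [Nat.cast_zero, zero_mul, mul_zero, add_zero, Nat.add_sub_cancel]
  congr 1
  refine Finset.sum_congr rfl fun j _ => ?_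
  have hj : (j.factorial : ℂ) ≠ 0 := mod_cast j.factorial_ne_zero
  have hj1 : (j + 1 : ℂ) ≠ 0 := mod_cast j.succ_ne_zero
  have hexp : s + ((j + 1 : ℕ) : ℂ) = s + 1 + j := by push_cast; ring
  rw [hexp, ascPochhammer_succ_eval_left, Nat.factorial_succ]
  push_cast
  field_simp
  ring

theorem norm_cpowTaylorRemainder_le (K : ℕ) {s : ℂ} {x h : ℝ} (hs : 0 ≤ s.re) (hx : 0 < x)
    (hh : 0 ≤ h) : ‖cpowTaylorRemainder K s x h‖ ≤
      ‖(ascPochhammer ℂ K).eval s‖ * x ^ (-(s.re + K)) * (h ^ K / K.factorial) := by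
  induction K generalizing s h with
  | zero =>
    have hpos := add_pos_of_pos_of_nonneg hx hh
    simpa [cpowTaylorRemainder, ← ofReal_add, norm_cpow_eq_rpow_re_of_pos hpos] using
      Real.rpow_le_rpow_of_nonpos hx (le_add_of_nonneg_right hh) (neg_nonpos.2 hs)
  | succ K ih =>
    set C := ‖(ascPochhammer ℂ (K + 1)).eval s‖ * x ^ (-(s.re + (K + 1 : ℕ))) with hC
    have hderiv (y : ℝ) (hy : 0 ≤ y) :=
      hasDerivAt_cpowTaylorRemainder K s (add_pos_of_pos_of_nonneg hx hy)
    have hbound (y : ℝ) (hy : 0 ≤ y) :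
        ‖-s * cpowTaylorRemainder K (s + 1) x y‖ ≤ C * (y ^ K / K.factorial) := by
      have hexp : -((s + 1).re + (K : ℝ)) = -(s.re + (K + 1 : ℕ)) := by
        simp only [add_re, one_re]
        push_cast
        ring
      have hrem := ih (s := s + 1) (by simpa using add_nonneg hs zero_le_one) hy
      rw [hexp] at hrem
      rw [norm_mul, norm_neg, hC, ascPochhammer_succ_eval_left, norm_mul, mul_assoc, mul_assoc ‖s‖]
      rw [mul_assoc] at hrem
      gcongr
    have hprimitive (y : ℝ) : HasDerivAt (fun y => C * (y ^ (K + 1) / (K + 1).factorial))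
        (C * (y ^ K / K.factorial)) y := by
      refine (((hasDerivAt_pow (K + 1) y).div_const _).const_mul C).congr_deriv ?_
      rw [Nat.factorial_succ, Nat.add_sub_cancel]
      push_cast
      field_simp
    exact image_norm_le_of_norm_deriv_right_le_deriv_boundary
      (fun y hy => (hderiv y hy.1).continuousAt.continuousWithinAt)
      (fun y hy => (hderiv y hy.1).hasDerivWithinAt)
      (by simp [cpowTaylorRemainder_succ_zero]) hprimitive (fun y hy => hbound y hy.1) ⟨hh, le_rfl⟩

end Taylor

section Continuation

/-- The `n`-th Dirichlet coefficient of the Davenport–Heilbronn function with parameter `κ`. -/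
noncomputable def dhCoeff (κ : ℂ) (n : ℕ) : ℂ :=
  match n % 5 with
  | 1 => 1
  | 2 => κ
  | 3 => -κ
  | 4 => -1
  | _ => 0

/-- The first two terms of the Euler–Maclaurin-type expansion of the tail
`∑ n > y, dhCoeff κ n * n ^ (-s)` at a multiple `y` of `5`. -/
noncomputable def dhCorrection (κ s : ℂ) (y : ℝ) : ℂ :=
  (3 + κ) / 5 * (y : ℂ) ^ (-s) - (2 + κ) / 5 * (s * (s + 1)) * (y : ℂ) ^ (-(s + 2))

/-- The partial sum of the Dirichlet series over `n < N`, corrected by the expansion of its tail. -/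
noncomputable def dhApprox (κ s : ℂ) (N : ℕ) : ℂ :=
  ∑ n ∈ Finset.range N, dhCoeff κ n * (n : ℂ) ^ (-s) + dhCorrection κ s N

/-- The amount by which `dhApprox` changes when the block of terms `y, …, y + 4` is added. -/
noncomputable def dhBlockError (κ s : ℂ) (y : ℝ) : ℂ :=
  ((y + 1 : ℝ) : ℂ) ^ (-s) + κ * ((y + 2 : ℝ) : ℂ) ^ (-s) - κ * ((y + 3 : ℝ) : ℂ) ^ (-s)
    - ((y + 4 : ℝ) : ℂ) ^ (-s) + (dhCorrection κ s (y + 5) - dhCorrection κ s y)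

variable {κ s : ℂ}

theorem dhCoeff_of_five_dvd {n : ℕ} (hn : 5 ∣ n) : dhCoeff κ n = 0 := by
  simp only [dhCoeff, Nat.mod_eq_zero_of_dvd hn]

theorem norm_dhCoeff_le_one (hκ : ‖κ‖ ≤ 1) (n : ℕ) : ‖dhCoeff κ n‖ ≤ 1 := by
  unfold dhCoeff
  split <;> simp [hκ]

theorem norm_add_div_five_le (hκ : ‖κ‖ ≤ 1) (n : ℕ) : ‖(n + κ) / 5‖ ≤ (n + 1) / 5 := by
  rw [norm_div, Complex.norm_ofNat]
  gcongr
  exact norm_add_le_of_le (Complex.norm_natCast n).le hκ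

theorem dhApprox_add_five {n : ℕ} (hn : 5 ∣ n) :
    dhApprox κ s (n + 5) = dhApprox κ s n + dhBlockError κ s n := by
  obtain ⟨h1, h2, h3, h4⟩ : (n + 1) % 5 = 1 ∧ (n + 2) % 5 = 2 ∧ (n + 3) % 5 = 3 ∧
      (n + 4) % 5 = 4 := by omega
  simp only [dhApprox, dhBlockError, Finset.sum_range_succ, dhCoeff_of_five_dvd hn]
  simp only [dhCoeff, h1, h2, h3, h4]
  push_cast
  ring

theorem dhApprox_mul_five_add (m k : ℕ) :
    dhApprox κ s (5 * (m + k)) =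
      dhApprox κ s (5 * m) + ∑ i ∈ Finset.range k, dhBlockError κ s (5 * (m + i)) := by
  induction k with
  | zero => simp
  | succ k ih =>
    rw [← add_assoc, mul_add_one, dhApprox_add_five (dvd_mul_right 5 _), ih,
      Finset.sum_range_succ, add_assoc]
    push_cast
    rfl

-- The terms of order below five cancel; this determines the coefficients in `dhCorrection`.
theorem dhBlockError_eq_taylorRemainder (y : ℝ) : dhBlockError κ s y =
    cpowTaylorRemainder 5 s y 1 + κ * cpowTaylorRemainder 5 s y 2
      - κ * cpowTaylorRemainder 5 s y 3 - cpowTaylorRemainder 5 s y 4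
      + (3 + κ) / 5 * cpowTaylorRemainder 5 s y 5
      - (2 + κ) / 5 * (s * (s + 1) * cpowTaylorRemainder 3 (s + 2) y 5) := by
  have h3 : s + 2 + 1 = s + 3 := by ring
  have h4 : s + 2 + 2 = s + 4 := by ring
  simp only [dhBlockError, dhCorrection, cpowTaylorRemainder, Finset.sum_range_succ,
    Finset.sum_range_zero, ascPochhammer_succ_eval, ascPochhammer_zero, Polynomial.eval_one,
    Nat.cast_zero, Nat.cast_one, Nat.cast_ofNat, add_zero, h3, h4]
  norm_num [Nat.factorial]
  ring

theorem norm_dhBlockError_le (hκ : ‖κ‖ ≤ 1) (hs : 0 ≤ s.re) {y : ℝ} (hy : 0 < y) :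
    ‖dhBlockError κ s y‖ ≤ 45 * (‖(ascPochhammer ℂ 5).eval s‖ * y ^ (-(s.re + 5))) := by
  set W := ‖(ascPochhammer ℂ 5).eval s‖ * y ^ (-(s.re + 5))
  have hrem5 {h : ℝ} (hh : 0 ≤ h) : ‖cpowTaylorRemainder 5 s y h‖ ≤ W * (h ^ 5 / 120) :=
    norm_cpowTaylorRemainder_le 5 hs hy hh
  have hrem3 : ‖s * (s + 1) * cpowTaylorRemainder 3 (s + 2) y 5‖ ≤ W * (125 / 6) := by
    have hpoch : s * (s + 1) * (ascPochhammer ℂ 3).eval (s + 2) = (ascPochhammer ℂ 5).eval s := by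
      rw [ascPochhammer_succ_eval_left s, ascPochhammer_succ_eval_left (s + 1), add_assoc,
        one_add_one_eq_two, mul_assoc]
    have hexp : -((s + 2).re + (3 : ℕ)) = -(s.re + 5) := by
      rw [add_re, re_ofNat, add_assoc]
      norm_num
    have h := norm_cpowTaylorRemainder_le 3 (s := s + 2) (x := y) (h := 5)
      (by rw [add_re, re_ofNat]; linarith) hy (by norm_num)
    rw [hexp] at h
    calc _ ≤ ‖s * (s + 1)‖ * (‖(ascPochhammer ℂ 3).eval (s + 2)‖ * y ^ (-(s.re + 5)) *
          (5 ^ 3 / (Nat.factorial 3 : ℕ))) := by rw [norm_mul]; gcongr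
      _ = W * (125 / 6) := by
        simp only [W, ← hpoch, norm_mul, Nat.factorial]
        norm_num
        ring
  have hW : 0 ≤ W := by positivity
  rw [dhBlockError_eq_taylorRemainder]
  refine (norm_sub_le_of_le (norm_add_le_of_le (norm_sub_le_of_le (norm_sub_le_of_le
    (norm_add_le_of_le (hrem5 zero_le_one) (norm_mul_le_of_le hκ (hrem5 zero_le_two)))
    (norm_mul_le_of_le hκ (hrem5 zero_le_three))) (hrem5 zero_le_four))
    (norm_mul_le_of_le (norm_add_div_five_le hκ 3) (hrem5 (by norm_num))))
    (norm_mul_le_of_le (norm_add_div_five_le hκ 2) hrem3)).trans ?_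
  norm_num
  linarith

theorem norm_dhBlockError_five_mul_le (hκ : ‖κ‖ ≤ 1) (hs : 0 ≤ s.re) (M i : ℕ) :
    ‖dhBlockError κ s (5 * (M + 1 + i))‖ ≤ 45 * ‖(ascPochhammer ℂ 5).eval s‖ *
      (5 * (M + 1)) ^ (-s.re) / 3125 * (1 / (M + 1 + i) ^ (4 + 1)) := by
  have hy : (0 : ℝ) < 5 * (M + 1 + i) := by positivity
  have hsplit : (5 * (M + 1 + i) : ℝ) ^ (-(s.re + 5)) =
      (5 * (M + 1 + i)) ^ (-s.re) / (5 * (M + 1 + i)) ^ 5 := by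
    rw [neg_add', Real.rpow_sub hy]
    norm_cast
  have hmono : (5 * (M + 1 + i) : ℝ) ^ (-s.re) ≤ (5 * (M + 1)) ^ (-s.re) :=
    Real.rpow_le_rpow_of_nonpos (by positivity) (by linarith [i.cast_nonneg (α := ℝ)]) (by linarith)
  calc _ ≤ 45 * (‖(ascPochhammer ℂ 5).eval s‖ * (5 * (M + 1 + i)) ^ (-(s.re + 5))) :=
        norm_dhBlockError_le hκ hs hy
    _ ≤ 45 * (‖(ascPochhammer ℂ 5).eval s‖ *
          ((5 * (M + 1)) ^ (-s.re) / (5 * (M + 1 + i)) ^ 5)) := by rw [hsplit]; gcongr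
    _ = _ := by field_simp; norm_num

theorem norm_tsum_dhBlockError_le (hκ : ‖κ‖ ≤ 1) (hs : 0 ≤ s.re) {M : ℕ} (hM : 0 < M) :
    ‖∑' i : ℕ, dhBlockError κ s (5 * (M + 1 + i))‖ ≤ 45 * ‖(ascPochhammer ℂ 5).eval s‖ *
      (5 * (M + 1)) ^ (-s.re) / (12500 * M ^ 4) := by
  have hsum := summable_one_div_add_one_add_pow M (by norm_num : 1 < 4 + 1)
  refine (tsum_of_norm_bounded (hsum.mul_left _).hasSum
    (norm_dhBlockError_five_mul_le hκ hs M)).trans ?_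
  rw [tsum_mul_left]
  calc _ ≤ 45 * ‖(ascPochhammer ℂ 5).eval s‖ * (5 * (M + 1)) ^ (-s.re) / 3125 *
        (1 / ((4 : ℕ) * M ^ 4)) := by
        gcongr
        exact tsum_one_div_add_one_add_pow_succ_le (Nat.cast_pos.2 hM) four_ne_zero
    _ = _ := by push_cast; ring

theorem norm_ascPochhammer_eval_le (s : ℂ) (K : ℕ) :
    ‖(ascPochhammer ℂ K).eval s‖ ≤ (‖s‖ + K) ^ K := by
  induction K with
  | zero => simp
  | succ K ih =>
    have hfactor : ‖s + K‖ ≤ ‖s‖ + (K + 1 : ℕ) := by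
      refine (norm_add_le _ _).trans ?_
      rw [Complex.norm_natCast]
      gcongr
      exact K.le_succ
    rw [ascPochhammer_succ_eval, norm_mul, pow_succ]
    gcongr
    refine ih.trans ?_
    gcongr
    exact K.le_succ

open Filter Topology

theorem differentiable_cpow_neg {x : ℂ} (hx : x ≠ 0) : Differentiable ℂ fun s : ℂ => x ^ (-s) :=
  fun _ => differentiableAt_id.neg.const_cpow (Or.inl hx)

theorem differentiable_dhCorrection (κ : ℂ) {y : ℝ} (hy : 0 < y) :
    Differentiable ℂ fun s => dhCorrection κ s y := by
  have hpow := differentiable_cpow_neg (ofReal_ne_zero.2 hy.ne')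
  have hpow' : Differentiable ℂ fun s : ℂ => (y : ℂ) ^ (-(s + 2)) :=
    hpow.comp (differentiable_id.add_const 2)
  unfold dhCorrection
  fun_prop

theorem differentiable_dhApprox (κ : ℂ) {N : ℕ} (hN : 0 < N) :
    Differentiable ℂ fun s => dhApprox κ s N := by
  refine (Differentiable.fun_sum fun n _ => ?_).add
    (differentiable_dhCorrection κ (Nat.cast_pos.2 hN))
  rcases eq_or_ne n 0 with rfl | hn
  · simp [dhCoeff_of_five_dvd]
  · exact (differentiable_cpow_neg (Nat.cast_ne_zero.2 hn)).const_mul _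

theorem differentiable_dhBlockError (κ : ℂ) {y : ℝ} (hy : 0 < y) :
    Differentiable ℂ fun s => dhBlockError κ s y := by
  have hpow (a : ℝ) (ha : 0 < a) :=
    differentiable_cpow_neg (ofReal_ne_zero.2 (add_pos hy ha).ne')
  have h1 := hpow 1 (by norm_num)
  have h2 := hpow 2 (by norm_num)
  have h3 := hpow 3 (by norm_num)
  have h4 := hpow 4 (by norm_num)
  have hy0 := differentiable_dhCorrection κ hy
  have hy5 := differentiable_dhCorrection κ (add_pos hy (by norm_num : (0 : ℝ) < 5))
  unfold dhBlockError
  fun_prop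

theorem tendsto_dhCorrection_atTop (hs : 0 < s.re) :
    Tendsto (fun y : ℝ => dhCorrection κ s y) atTop (𝓝 0) := by
  have hpow {w : ℂ} (hw : 0 < w.re) : Tendsto (fun y : ℝ => (y : ℂ) ^ (-w)) atTop (𝓝 0) := by
    rw [tendsto_zero_iff_norm_tendsto_zero]
    refine (tendsto_rpow_neg_atTop hw).congr' ?_
    filter_upwards [eventually_gt_atTop 0] with y hy
    rw [norm_cpow_eq_rpow_re_of_pos hy, neg_re]
  have hs2 : 0 < (s + 2).re := by
    rw [add_re, re_ofNat]
    positivity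
  simpa only [mul_zero, sub_zero, dhCorrection] using ((hpow hs).const_mul ((3 + κ) / 5)).sub
    ((hpow hs2).const_mul ((2 + κ) / 5 * (s * (s + 1))))

theorem abs_dhKappa_sub_le : |dhKappa - 0.28407904384| ≤ 1e-9 := by
  have h5 : 2.2360679774 ≤ √5 := Real.le_sqrt_of_sq_le (by norm_num)
  have h5' : √5 ≤ 2.236067978 := Real.sqrt_le_iff.2 ⟨by norm_num, by norm_num⟩
  have h10 : 2.3511410085 ≤ √(10 - 2 * √5) := Real.le_sqrt_of_sq_le (by norm_num at h5' ⊢; linarith)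
  have h10' : √(10 - 2 * √5) ≤ 2.3511410095 :=
    Real.sqrt_le_iff.2 ⟨by norm_num, by norm_num at h5 ⊢; linarith⟩
  have hpos : 0 < √5 - 1 := by linarith
  rw [abs_le, dhKappa]
  constructor
  · rw [le_sub_iff_add_le, le_div_iff₀ hpos]
    norm_num at h5' h10 ⊢
    linarith
  · rw [sub_le_iff_le_add, div_le_iff₀ hpos]
    norm_num at h5 h10' ⊢
    linarith

theorem norm_dhKappa_le_one : ‖(dhKappa : ℂ)‖ ≤ 1 := by
  have h := abs_le.1 abs_dhKappa_sub_le
  rw [norm_real, Real.norm_eq_abs, abs_le]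
  constructor <;> norm_num at h ⊢ <;> linarith

variable {X : DirichletCharacter ℂ 5}

theorem dhCoeff_eq_character_combination (hX : X 2 = Complex.I) (κ : ℂ) (n : ℕ) :
    dhCoeff κ n = (1 - Complex.I * κ) / 2 * X n +
      (1 + Complex.I * κ) / 2 * X.ringHomComp (starRingEnd ℂ) n := by
  have h0 : X 0 = 0 := MulChar.map_nonunit X (by decide)
  have h4 : X 4 = -1 := by
    rw [show (4 : ZMod 5) = 2 * 2 by decide, map_mul, hX, I_mul_I]
  have h3 : X 3 = -Complex.I := by
    rw [show (3 : ZMod 5) = 4 * 2 by decide, map_mul, h4, hX, neg_one_mul]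
  have hlt : n % 5 < 5 := n.mod_lt (by norm_num)
  rw [← ZMod.natCast_mod n 5, MulChar.ringHomComp_apply, dhCoeff]
  generalize n % 5 = r at hlt
  interval_cases r <;> simp [h0, hX, h3, h4] <;> ring_nf <;> simp

theorem differentiable_dhFunction (hX : X 2 = Complex.I) : Differentiable ℂ (dhFunction X) := by
  have hunit : IsUnit (2 : ZMod 5) := by decide
  have hX1 : X ≠ 1 := by
    rintro rfl
    rw [MulChar.one_apply hunit] at hX
    simpa using congrArg Complex.re hX
  have hconj : X.ringHomComp (starRingEnd ℂ) ≠ 1 := by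
    intro h
    have h2 := DFunLike.congr_fun h 2
    rw [MulChar.ringHomComp_apply, hX, MulChar.one_apply hunit] at h2
    simpa using congrArg Complex.re h2
  exact ((DirichletCharacter.differentiable_LFunction hX1).const_mul _).add
    ((DirichletCharacter.differentiable_LFunction hconj).const_mul _)

theorem tendsto_dhApprox_of_one_lt_re (hX : X 2 = Complex.I) (hs : 1 < s.re) :
    Tendsto (dhApprox dhKappa s) atTop (𝓝 (dhFunction X s)) := by
  have hseries (Y : DirichletCharacter ℂ 5) :
      HasSum (LSeries.term (fun n => Y n) s) (Y.LFunction s) := by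
    rw [Y.LFunction_eq_LSeries hs]
    exact (Y.LSeriesSummable_of_one_lt_re hs).hasSum
  have hsum : Tendsto (fun N => ∑ n ∈ Finset.range N, dhCoeff dhKappa n * (n : ℂ) ^ (-s)) atTop
      (𝓝 (dhFunction X s)) := by
    refine (((hseries X).mul_left ((1 - Complex.I * dhKappa) / 2)).add
      ((hseries (X.ringHomComp (starRingEnd ℂ))).mul_left
        ((1 + Complex.I * dhKappa) / 2))).tendsto_sum_nat.congr fun N => ?_
    refine Finset.sum_congr rfl fun n _ => ?_
    rcases eq_or_ne n 0 with rfl | hn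
    · simp [dhCoeff_of_five_dvd]
    · rw [dhCoeff_eq_character_combination hX, LSeries.term_of_ne_zero hn,
        LSeries.term_of_ne_zero hn, cpow_neg]
      ring
  simpa only [add_zero, dhApprox, Function.comp_def] using! hsum.add
    ((tendsto_dhCorrection_atTop (zero_lt_one.trans hs)).comp tendsto_natCast_atTop_atTop)

theorem exists_summable_bound_dhBlockError (hκ : ‖κ‖ ≤ 1) (M : ℕ) (R : ℝ) :
    ∃ u : ℕ → ℝ, Summable u ∧ ∀ (i : ℕ) (s : ℂ), 0 < s.re → ‖s‖ < R →
      ‖dhBlockError κ s (5 * (M + 1 + i))‖ ≤ u i := by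
  have hsum := summable_one_div_add_one_add_pow M (by norm_num : 1 < 4 + 1)
  refine ⟨_, hsum.mul_left (45 * (R + 5) ^ 5 * 1 / 3125),
    fun i s hs hR => (norm_dhBlockError_five_mul_le hκ hs.le M i).trans ?_⟩
  have hpoch : ‖(ascPochhammer ℂ 5).eval s‖ ≤ (R + 5) ^ 5 := by
    refine (norm_ascPochhammer_eval_le s 5).trans ?_
    push_cast
    gcongr
  have hrpow : (5 * (M + 1) : ℝ) ^ (-s.re) ≤ 1 :=
    Real.rpow_le_one_of_one_le_of_nonpos (by linarith [M.cast_nonneg (α := ℝ)]) (by linarith)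
  have hR5 : 0 ≤ R + 5 := by linarith [norm_nonneg s]
  gcongr

theorem dhFunction_eq_of_one_lt_re (hX : X 2 = Complex.I) (hs : 1 < s.re)
    (M : ℕ) : dhFunction X s = dhApprox dhKappa s (5 * (M + 1)) +
      ∑' i : ℕ, dhBlockError dhKappa s (5 * (M + 1 + i)) := by
  obtain ⟨u, hu, hbound⟩ := exists_summable_bound_dhBlockError norm_dhKappa_le_one M (‖s‖ + 1)
  have hsum := Summable.of_norm_bounded hu fun i =>
    hbound i s (zero_lt_one.trans hs) (lt_add_one _)
  have hblocks : Tendsto (fun k => 5 * (M + 1 + k)) atTop atTop :=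
    tendsto_atTop_mono (fun k => by simp only [id]; omega) tendsto_id
  refine tendsto_nhds_unique ((tendsto_dhApprox_of_one_lt_re hX hs).comp hblocks)
    ((hsum.hasSum.tendsto_sum_nat.const_add _).congr fun k => ?_)
  rw [Function.comp_apply, dhApprox_mul_five_add (M + 1) k]
  push_cast
  rfl

theorem dhFunction_eq_dhApprox_add_tsum (hX : X 2 = Complex.I) (hs : 0 < s.re)
    (M : ℕ) : dhFunction X s = dhApprox dhKappa s (5 * (M + 1)) +
      ∑' i : ℕ, dhBlockError dhKappa s (5 * (M + 1 + i)) := by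
  set U : Set ℂ := {z | 0 < z.re} ∩ Metric.ball 0 (‖s‖ + 3)
  have hU : IsOpen U := (isOpen_lt continuous_const continuous_re).inter Metric.isOpen_ball
  have hconn : IsPreconnected U :=
    ((convex_halfSpace_re_gt 0).inter (convex_ball 0 _)).isPreconnected
  have hsU : s ∈ U := ⟨hs, by simp⟩
  have h2U : (2 : ℂ) ∈ U := by
    refine ⟨by simp, ?_⟩
    rw [mem_ball_zero_iff, Complex.norm_ofNat]
    linarith [norm_nonneg s]
  obtain ⟨u, hu, hbound⟩ := exists_summable_bound_dhBlockError norm_dhKappa_le_one M (‖s‖ + 3)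
  have htail : DifferentiableOn ℂ
      (fun z => ∑' i : ℕ, dhBlockError dhKappa z (5 * (M + 1 + i))) U :=
    differentiableOn_tsum_of_summable_norm hu
      (fun i => (differentiable_dhBlockError _ (by positivity)).differentiableOn) hU
      fun i z hz => hbound i z hz.1 (mem_ball_zero_iff.1 hz.2)
  have happrox := (differentiable_dhApprox dhKappa
    (by positivity : 0 < 5 * (M + 1))).differentiableOn (s := U)
  refine ((differentiable_dhFunction hX).differentiableOn.analyticOnNhd hU
    ).eqOn_of_preconnected_of_eventuallyEq ((happrox.add htail).analyticOnNhd hU) hconn h2U ?_ hsU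
  filter_upwards [(isOpen_lt continuous_const continuous_re).mem_nhds
    (by simp : (1 : ℝ) < (2 : ℂ).re)] with z hz
  exact dhFunction_eq_of_one_lt_re hX hz M

end Continuation

section BallArithmetic

/-- A closed disc in the complex plane in fixed-point form, with centre `(re + im * I) / scale` and
radius `rad / scale`. The integer entries let the kernel evaluate enclosures of complex numbers. -/
structure ComplexBall where
  re : ℤ
  im : ℤ
  rad : ℕ

namespace ComplexBall

/-- The common denominator of all fixed-point numbers. -/
def scale : ℕ := 10 ^ 18

/-- The numerator of the centre of a ball. -/
noncomputable def center (b : ComplexBall) : ℂ := b.re + b.im * I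

instance : Membership ℂ ComplexBall := ⟨fun b x => ‖scale * x - b.center‖ ≤ b.rad⟩

instance : NatCast ComplexBall := ⟨fun n => ⟨n * scale, 0, 0⟩⟩

instance : Zero ComplexBall := ⟨⟨0, 0, 0⟩⟩

instance : One ComplexBall := ⟨⟨scale, 0, 0⟩⟩

instance : Add ComplexBall := ⟨fun a b => ⟨a.re + b.re, a.im + b.im, a.rad + b.rad⟩⟩

instance : Neg ComplexBall := ⟨fun a => ⟨-a.re, -a.im, a.rad⟩⟩

/-- An integer upper bound for the norm of `center`. -/
def centerBound (b : ComplexBall) : ℕ := b.re.natAbs + b.im.natAbs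

/-- A ball containing the quotient by `d` of the disc with numerators `p + q * I` and `e`; the
radius absorbs the rounding of the three integer divisions. -/
def round (p q : ℤ) (e d : ℕ) : ComplexBall := ⟨p / d, q / d, e / d + 3⟩

instance : Mul ComplexBall := ⟨fun a b =>
  round (a.re * b.re - a.im * b.im) (a.re * b.im + a.im * b.re)
    (a.centerBound * b.rad + (b.centerBound + b.rad) * a.rad) scale⟩

/-- The quotient of a ball by a positive natural number. -/
def divNat (b : ComplexBall) (d : ℕ) : ComplexBall := round b.re b.im b.rad d

/-- The ball with the same centre and the radius increased by `p / q`, rounded up. -/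
def inflate (b : ComplexBall) (p q : ℕ) : ComplexBall := ⟨b.re, b.im, b.rad + (p * scale / q + 1)⟩

variable {a b : ComplexBall} {x y : ℂ}

theorem mem_def : x ∈ b ↔ ‖scale * x - b.center‖ ≤ b.rad := Iff.rfl

theorem scale_pos : (0 : ℝ) < scale := by norm_num [scale]

theorem natCast_mem (n : ℕ) : (n : ℂ) ∈ (n : ComplexBall) := by
  change ‖(scale * n - (((n * scale : ℕ) : ℤ) + (0 : ℤ) * I) : ℂ)‖ ≤ (0 : ℕ)
  push_cast
  simp [mul_comm]

theorem ofNat_mem (n : ℕ) [n.AtLeastTwo] : (ofNat(n) : ℂ) ∈ (ofNat(n) : ComplexBall) := by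
  rw [← Nat.cast_ofNat]
  exact natCast_mem n

theorem zero_mem : (0 : ℂ) ∈ (0 : ComplexBall) := by
  simp [mem_def, center, show (0 : ComplexBall) = ⟨0, 0, 0⟩ from rfl]

theorem one_mem : (1 : ℂ) ∈ (1 : ComplexBall) := by
  simp [mem_def, center, show (1 : ComplexBall) = ⟨scale, 0, 0⟩ from rfl]

theorem neg_mem (hx : x ∈ a) : -x ∈ -a := by
  have hcenter : (-a).center = -a.center := by
    simp only [center, show -a = ⟨-a.re, -a.im, a.rad⟩ from rfl]
    push_cast
    ring
  rw [mem_def, hcenter, mul_neg, ← neg_sub', norm_neg]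
  exact hx

theorem add_mem (hx : x ∈ a) (hy : y ∈ b) : x + y ∈ a + b := by
  have hcenter : (a + b).center = a.center + b.center := by
    simp only [center, show a + b = ⟨a.re + b.re, a.im + b.im, a.rad + b.rad⟩ from rfl]
    push_cast
    ring
  have hrad : ((a + b).rad : ℝ) = a.rad + b.rad := Nat.cast_add _ _
  rw [mem_def, hcenter, hrad, mul_add, add_sub_add_comm]
  exact norm_add_le_of_le hx hy

theorem norm_center_le (b : ComplexBall) : ‖b.center‖ ≤ b.centerBound := by
  refine (norm_add_le _ _).trans_eq ?_
  simp [centerBound, Nat.cast_natAbs, norm_intCast]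

theorem norm_scale_mul_le (hx : x ∈ b) : ‖scale * x‖ ≤ b.centerBound + b.rad := by
  have hsplit : (scale * x : ℂ) = b.center + (scale * x - b.center) := by ring
  rw [hsplit]
  exact norm_add_le_of_le (norm_center_le b) hx

theorem natCast_div_le (m n : ℕ) : (m / n : ℝ) ≤ (m / n : ℕ) + 1 := by
  rw [← Nat.floor_div_eq_div (K := ℝ)]
  exact (Nat.lt_floor_add_one _).le

theorem mem_round {p q : ℤ} {e d : ℕ} (hd : 0 < d)
    (h : ‖d * (scale * x) - (p + q * I)‖ ≤ e) : x ∈ round p q e d := by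
  have hd' : (0 : ℝ) < d := Nat.cast_pos.2 hd
  have hfloor (m : ℤ) : ‖(m / d - (m / d : ℤ) : ℂ)‖ ≤ 1 := by
    have hcast : (m / d - (m / d : ℤ) : ℂ) = ((Int.fract (m / d : ℝ) : ℝ) : ℂ) := by
      rw [Int.fract, Int.floor_div_natCast, Int.floor_intCast]
      push_cast
      rfl
    rw [hcast, norm_real, Real.norm_of_nonneg (Int.fract_nonneg _)]
    exact (Int.fract_lt_one _).le
  have hquot : ‖scale * x - (p + q * I) / d‖ ≤ e / d := by
    rw [le_div_iff₀ hd', mul_comm, ← Complex.norm_natCast d, ← norm_mul, mul_sub,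
      mul_div_cancel₀ _ (Nat.cast_ne_zero.2 hd.ne')]
    exact h
  calc ‖scale * x - (round p q e d).center‖
      = ‖scale * x - (p + q * I) / d
          + ((p / d - (p / d : ℤ)) + (q / d - (q / d : ℤ)) * I)‖ := by
        simp only [round, center]
        congr 1
        ring
    _ ≤ e / d + (1 + 1) := by
        refine norm_add_le_of_le hquot (norm_add_le_of_le (hfloor p) ?_)
        rw [norm_mul, norm_I, mul_one]
        exact hfloor q
    _ ≤ (round p q e d).rad := by
        simp only [round]
        push_cast
        linarith [natCast_div_le e d]

theorem mul_mem (hx : x ∈ a) (hy : y ∈ b) : x * y ∈ a * b := by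
  refine mem_round (by norm_num [scale]) ?_
  calc _ = ‖a.center * (scale * y - b.center) + scale * y * (scale * x - a.center)‖ := by
        simp only [center]
        push_cast
        congr 1
        linear_combination (a.im * b.im : ℂ) * I_sq
    _ ≤ a.centerBound * b.rad + (b.centerBound + b.rad) * a.rad := by
        refine norm_add_le_of_le ?_ ?_ <;> rw [norm_mul]
        · exact mul_le_mul (norm_center_le a) hy (norm_nonneg _) (Nat.cast_nonneg _)
        · exact mul_le_mul (norm_scale_mul_le hy) hx (norm_nonneg _) (by positivity)
    _ = _ := by push_cast; rfl

theorem mem_divNat (hx : x ∈ b) {d : ℕ} (hd : 0 < d) : x / d ∈ b.divNat d := by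
  refine mem_round hd ?_
  rw [mul_left_comm, mul_div_cancel₀ _ (Nat.cast_ne_zero.2 hd.ne')]
  exact hx

theorem mem_inflate (hx : x ∈ b) {p q : ℕ} (hxy : ‖y - x‖ ≤ p / q) : y ∈ b.inflate p q := by
  have hrad : scale * ‖y - x‖ ≤ (p * scale / q : ℕ) + 1 := by
    refine le_trans ?_ (natCast_div_le _ _)
    rw [Nat.cast_mul, mul_comm, mul_div_right_comm]
    exact mul_le_mul_of_nonneg_right hxy scale_pos.le
  have hsplit : scale * y - b.center = scale * x - b.center + scale * (y - x) := by ring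
  simp only [mem_def, center, inflate, Nat.cast_add, Nat.cast_one] at hx hsplit ⊢
  rw [hsplit]
  refine norm_add_le_of_le hx ?_
  rwa [norm_mul, Complex.norm_natCast]

theorem re_le (hx : x ∈ b) : scale * x.re ≤ b.re + b.rad := by
  have h := (le_abs_self _).trans ((abs_re_le_norm _).trans hx)
  simp only [center, sub_re, mul_re, natCast_re, natCast_im, add_re, intCast_re, intCast_im, I_re,
    I_im] at h
  linarith

/-- The sum of the balls `f i` over `i < n`, by structural recursion on `n`. -/
def sum (f : ℕ → ComplexBall) : ℕ → ComplexBall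
  | 0 => 0
  | n + 1 => sum f n + f n

theorem sum_mem {f : ℕ → ComplexBall} {g : ℕ → ℂ} (h : ∀ i, g i ∈ f i) (n : ℕ) :
    ∑ i ∈ Finset.range n, g i ∈ sum f n := by
  induction n with
  | zero => exact zero_mem
  | succ n ih => rw [Finset.sum_range_succ]; exact add_mem ih (h n)

/-- An enclosure of `log (n + 1) - log n` from `K` terms of the expansion
`log ((1 + t) / (1 - t)) = 2 * ∑ i, t ^ (2 * i + 1) / (2 * i + 1)` at `t = 1 / (2 * n + 1)`. -/
def logSucc (K n : ℕ) : ComplexBall :=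
  (sum (fun i => divNat 2 ((2 * i + 1) * (2 * n + 1) ^ (2 * i + 1))) K).inflate
    3 ((2 * n + 1) ^ (2 * K + 1))

theorem abs_log_succ_sub_sub_sum_le {n : ℕ} (hn : 0 < n) (K : ℕ) :
    |Real.log (n + 1 : ℕ) - Real.log n -
      ∑ i ∈ Finset.range K, 2 / (((2 * i + 1) * (2 * n + 1) ^ (2 * i + 1) : ℕ) : ℝ)| ≤
      (3 : ℕ) / (((2 * n + 1) ^ (2 * K + 1) : ℕ) : ℝ) := by
  have hn' : (1 : ℝ) ≤ n := Nat.one_le_cast.2 hn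
  set t : ℝ := 1 / (2 * n + 1) with ht
  have ht0 : 0 < t := by positivity
  have ht3 : t ≤ 1 / 3 := one_div_le_one_div_of_le (by norm_num) (by linarith)
  have hlog : Real.log (n + 1 : ℕ) - Real.log n = Real.log ((1 + t) / (1 - t)) := by
    rw [← Real.log_div (by positivity) (by positivity)]
    congr 1
    rw [ht]
    push_cast
    field_simp
    ring
  have hsum : ∑ i ∈ Finset.range K, 2 / (((2 * i + 1) * (2 * n + 1) ^ (2 * i + 1) : ℕ) : ℝ) =
      2 * ∑ i ∈ Finset.range K, t ^ (2 * i + 1) / (2 * i + 1) := by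
    rw [Finset.mul_sum]
    refine Finset.sum_congr rfl fun i _ => ?_
    rw [ht, one_div_pow]
    push_cast
    field_simp
  have hseries := Real.sum_range_sub_log_div_le (x := t) (by rw [abs_of_pos ht0]; linarith) K
  rw [abs_of_pos ht0] at hseries
  calc _ = 2 * |1 / 2 * Real.log ((1 + t) / (1 - t)) -
          ∑ i ∈ Finset.range K, t ^ (2 * i + 1) / (2 * i + 1)| := by
        rw [hlog, hsum, ← abs_two, ← abs_mul, abs_two]
        congr 1
        ring
    _ ≤ 2 * (t ^ (2 * K + 1) / (1 - t ^ 2)) := by gcongr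
    _ ≤ 2 * (t ^ (2 * K + 1) / (2 / 3)) := by gcongr; nlinarith
    _ = _ := by
        rw [ht, one_div_pow]
        push_cast
        ring

theorem log_succ_mem {n : ℕ} (hn : 0 < n) (hx : (Real.log n : ℂ) ∈ b) (K : ℕ) :
    (Real.log (n + 1 : ℕ) : ℂ) ∈ b + logSucc K n := by
  rw [← add_sub_cancel (Real.log n : ℂ) (Real.log (n + 1 : ℕ))]
  have hterm (i : ℕ) : (2 / ((2 * i + 1) * (2 * n + 1) ^ (2 * i + 1) : ℕ) : ℂ) ∈
      divNat 2 ((2 * i + 1) * (2 * n + 1) ^ (2 * i + 1)) :=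
    mem_divNat (ofNat_mem 2) (by positivity)
  refine add_mem hx (mem_inflate (sum_mem hterm K) ?_)
  have h := abs_log_succ_sub_sub_sum_le hn K
  rw [← Real.norm_eq_abs, ← norm_real] at h
  push_cast at h ⊢
  exact h

/-- Horner evaluation of `∑ i < J, z ^ i / i! + z ^ J / J! * e`. -/
def expHorner (z e : ComplexBall) : ℕ → ComplexBall
  | 0 => e
  | J + 1 => expHorner z (1 + (z * e).divNat (J + 1)) J

/-- The `k`-fold repeated square. -/
def powTwoPow (b : ComplexBall) : ℕ → ComplexBall
  | 0 => b
  | k + 1 => powTwoPow (b * b) k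

/-- An enclosure of the exponential on `z`, from the Taylor polynomial of degree `J` at
`z / 2 ^ k` followed by `k` squarings. It is valid for arguments of norm at most `2 ^ k`. -/
def exp (J k : ℕ) (z : ComplexBall) : ComplexBall :=
  ((expHorner (z.divNat (2 ^ k)) 1 J).inflate 2 (J + 1).factorial).powTwoPow k

theorem expHorner_mem (hx : x ∈ a) (J : ℕ) {y : ℂ} {b : ComplexBall} (hy : y ∈ b) :
    ∑ i ∈ Finset.range J, x ^ i / i.factorial + x ^ J / J.factorial * y ∈ expHorner a b J := by
  induction J generalizing y b with
  | zero => simpa [expHorner] using hy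
  | succ J ih =>
    rw [expHorner]
    convert ih (add_mem one_mem (mem_divNat (mul_mem hx hy) J.succ_pos)) using 1
    rw [Finset.sum_range_succ, Nat.factorial_succ]
    push_cast
    field_simp
    ring

theorem powTwoPow_mem (k : ℕ) {x : ℂ} {b : ComplexBall} (hx : x ∈ b) :
    x ^ 2 ^ k ∈ b.powTwoPow k := by
  induction k generalizing x b with
  | zero => simpa [powTwoPow] using hx
  | succ k ih =>
    rw [pow_succ', pow_mul, sq]
    exact ih (mul_mem hx hx)

theorem exp_mem (hx : x ∈ b) (J : ℕ) {k : ℕ} (hk : ‖x‖ ≤ 2 ^ k) :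
    Complex.exp x ∈ b.exp J k := by
  set t : ℂ := x / (2 ^ k : ℕ) with ht
  have ht1 : ‖t‖ ≤ 1 := by
    rw [ht, norm_div, Complex.norm_natCast]
    exact div_le_one_of_le₀ (by exact_mod_cast hk) (Nat.cast_nonneg _)
  have hexp : Complex.exp x = Complex.exp t ^ 2 ^ k := by
    rw [← Complex.exp_nat_mul, ht, mul_div_cancel₀ _ (Nat.cast_ne_zero.2 (by positivity))]
  have hpoly := expHorner_mem (mem_divNat hx (pow_pos two_pos k)) J one_mem
  rw [mul_one, ← Finset.sum_range_succ] at hpoly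
  rw [hexp]
  refine powTwoPow_mem k (mem_inflate hpoly ((Complex.exp_bound' ?_).trans ?_))
  · exact div_le_div₀ zero_le_one ht1 two_pos (by norm_cast; omega)
  · rw [div_mul_eq_mul_div, Nat.cast_two]
    gcongr
    exact mul_le_of_le_one_left zero_le_two (pow_le_one₀ (norm_nonneg _) ht1)

/-- Evaluates `f n` after `n` has been reduced to a literal. -/
def natForce {α : Type} (n : ℕ) (f : ℕ → α) : α :=
  match n with
  | 0 => f 0
  | k + 1 => f (k + 1)

/-- Evaluates `f n` after `n` has been reduced to a literal. -/
def intForce {α : Type} (n : ℤ) (f : ℤ → α) : α :=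
  match n with
  | .ofNat k => natForce k fun k => f (.ofNat k)
  | .negSucc k => natForce k fun k => f (.negSucc k)

/-- Evaluates `f b` after the entries of `b` have been reduced to literals. Without this the lazy
evaluation in the kernel would duplicate the unevaluated entries in every later use of `b`. -/
def force {α : Type} (b : ComplexBall) (f : ComplexBall → α) : α :=
  intForce b.re fun x => intForce b.im fun y => natForce b.rad fun r => f ⟨x, y, r⟩

theorem natForce_eq {α : Type} (n : ℕ) (f : ℕ → α) : natForce n f = f n := by
  cases n <;> rfl

theorem intForce_eq {α : Type} (n : ℤ) (f : ℤ → α) : intForce n f = f n := by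
  cases n <;> simp only [intForce, natForce_eq]

theorem force_eq {α : Type} (b : ComplexBall) (f : ComplexBall → α) : b.force f = f b := by
  simp only [force, intForce_eq, natForce_eq]

end ComplexBall

end BallArithmetic

section DirichletSums

open ComplexBall

/-- A loop state for the simultaneous evaluation of `∑ c m * m ^ (-s)` and its derivative
`-∑ c m * m ^ (-s) * log m` over `m < index`. -/
structure DirichletSums where
  index : ℕ
  log : ComplexBall
  sum : ComplexBall
  logSum : ComplexBall

namespace DirichletSums

/-- The entries of the state enclose the quantities they stand for. -/
structure Encloses (p : DirichletSums) (c : ℕ → ℂ) (s : ℂ) : Prop where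
  index_pos : 0 < p.index
  log_mem : (Real.log p.index : ℂ) ∈ p.log
  sum_mem : ∑ m ∈ Finset.range p.index, c m * (m : ℂ) ^ (-s) ∈ p.sum
  logSum_mem : ∑ m ∈ Finset.range p.index, c m * (m : ℂ) ^ (-s) * Real.log m ∈ p.logSum

/-- The state before the first term. -/
def init : DirichletSums := ⟨1, 0, 0, 0⟩

/-- An enclosure of `index ^ (-s)` for `s ∈ b`, provided that `‖s‖ * log index ≤ 2 ^ 10`. -/
def power (p : DirichletSums) (b : ComplexBall) : ComplexBall := (-b * p.log).exp 14 10

/-- The state after one more term. The number of terms for the logarithm keeps its total error below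
`10⁻¹²`. -/
def next (c : ℕ → ComplexBall) (b : ComplexBall) (p : DirichletSums) : DirichletSums :=
  let t := c p.index * p.power b
  ⟨p.index + 1, p.log + logSucc (4 + 20 / p.index) p.index, p.sum + t, p.logSum + t * p.log⟩

/-- Evaluates `f p` after the entries of `p` have been reduced to literals. -/
def force {α : Type} (p : DirichletSums) (f : DirichletSums → α) : α :=
  natForce p.index fun n => p.log.force fun l => p.sum.force fun x => p.logSum.force fun y =>
    f ⟨n, l, x, y⟩

/-- The state after `k` more terms. -/
def iterate (c : ℕ → ComplexBall) (b : ComplexBall) : ℕ → DirichletSums → DirichletSums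
  | 0, p => p
  | k + 1, p => (p.next c b).force (iterate c b k)

theorem force_eq {α : Type} (p : DirichletSums) (f : DirichletSums → α) : p.force f = f p := by
  simp only [force, natForce_eq, ComplexBall.force_eq]

variable {c : ℕ → ℂ} {C : ℕ → ComplexBall} {s : ℂ} {b : ComplexBall} {p : DirichletSums}

theorem encloses_init (hc : c 0 = 0) (s : ℂ) : init.Encloses c s where
  index_pos := one_pos
  log_mem := by simpa [init] using zero_mem
  sum_mem := by simpa [init, hc] using zero_mem
  logSum_mem := by simpa [init] using zero_mem

theorem Encloses.power_mem (hp : p.Encloses c s) (hs : s ∈ b)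
    (hlog : ‖s‖ * Real.log p.index ≤ 2 ^ 10) : (p.index : ℂ) ^ (-s) ∈ p.power b := by
  rw [Complex.cpow_def_of_ne_zero (Nat.cast_ne_zero.2 hp.index_pos.ne'), ← natCast_log, mul_comm]
  refine exp_mem (mul_mem (neg_mem hs) hp.log_mem) 14 ?_
  rwa [norm_mul, norm_neg, norm_real, Real.norm_of_nonneg (Real.log_natCast_nonneg _)]

theorem Encloses.next (hp : p.Encloses c s) (hc : c p.index ∈ C p.index) (hs : s ∈ b)
    (hlog : ‖s‖ * Real.log p.index ≤ 2 ^ 10) : (p.next C b).Encloses c s where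
  index_pos := p.index.succ_pos
  log_mem := log_succ_mem hp.index_pos hp.log_mem _
  sum_mem := by
    simp only [DirichletSums.next, Finset.sum_range_succ]
    exact add_mem hp.sum_mem (mul_mem hc (hp.power_mem hs hlog))
  logSum_mem := by
    simp only [DirichletSums.next, Finset.sum_range_succ]
    exact add_mem hp.logSum_mem (mul_mem (mul_mem hc (hp.power_mem hs hlog)) hp.log_mem)

theorem index_iterate (k : ℕ) (p : DirichletSums) :
    (iterate C b k p).index = p.index + k := by
  induction k generalizing p with
  | zero => rfl
  | succ k ih => rw [iterate, force_eq, ih, next, add_right_comm, add_assoc]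

theorem Encloses.iterate (hc : ∀ n, c n ∈ C n) (hs : s ∈ b) (k : ℕ) (hp : p.Encloses c s)
    (hlog : ‖s‖ * Real.log (p.index + k : ℕ) ≤ 2 ^ 10) : (iterate C b k p).Encloses c s := by
  induction k generalizing p with
  | zero => exact hp
  | succ k ih =>
    have hmono : ‖s‖ * Real.log p.index ≤ ‖s‖ * Real.log (p.index + (k + 1) : ℕ) :=
      mul_le_mul_of_nonneg_left (Real.log_le_log (Nat.cast_pos.2 hp.index_pos)
        (Nat.cast_le.2 (Nat.le_add_right _ _))) (norm_nonneg _)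
    rw [DirichletSums.iterate, force_eq]
    refine ih (hp.next (hc _) hs (hmono.trans hlog)) ?_
    rwa [DirichletSums.next, add_right_comm, add_assoc]

end DirichletSums

end DirichletSums

section Linearization

theorem norm_natCast_cpow_neg_le {s : ℂ} (hs : 1 / 2 ≤ s.re) {n : ℕ} (hn : 0 < n) :
    ‖(n : ℂ) ^ (-s)‖ ≤ 1 / √n := by
  rw [norm_natCast_cpow_of_pos hn, neg_re, Real.rpow_neg n.cast_nonneg, one_div,
    Real.sqrt_eq_rpow]
  gcongr
  exact Nat.one_le_cast.2 hn

theorem norm_mul_natCast_cpow_neg_sub_linear_le {c : ℂ} (hc : ‖c‖ ≤ 1) {s z : ℂ}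
    (hs : 1 / 2 ≤ s.re) {n N : ℕ} (hn : 0 < n) (hnN : n ≤ N) (hz : ‖z - s‖ * Real.log N ≤ 1) :
    ‖c * ((n : ℂ) ^ (-z) - (n : ℂ) ^ (-s) * (1 - (z - s) * Real.log n))‖ ≤
      1 / √n * (‖z - s‖ * Real.log N) ^ 2 := by
  have hlog : ‖z - s‖ * |Real.log n| ≤ ‖z - s‖ * Real.log N := by
    rw [abs_of_nonneg (Real.log_natCast_nonneg n)]
    gcongr
  have htaylor := norm_cpow_neg_sub_linear_le (Nat.cast_pos.2 hn) s z (hlog.trans hz)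
  rw [ofReal_natCast] at htaylor
  rw [norm_mul, ← one_mul (1 / √n * _)]
  refine mul_le_mul hc (htaylor.trans ?_) (norm_nonneg _) zero_le_one
  gcongr
  exact norm_natCast_cpow_neg_le hs hn

theorem norm_sum_cpow_neg_sub_linear_le {c : ℕ → ℂ} (hc0 : c 0 = 0) (hc : ∀ n, ‖c n‖ ≤ 1)
    {s z : ℂ} (hs : 1 / 2 ≤ s.re) {N : ℕ} (hz : ‖z - s‖ * Real.log N ≤ 1) :
    ‖∑ n ∈ Finset.range (N + 1), c n * (n : ℂ) ^ (-z) -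
      (∑ n ∈ Finset.range (N + 1), c n * (n : ℂ) ^ (-s) -
        (z - s) * ∑ n ∈ Finset.range (N + 1), c n * (n : ℂ) ^ (-s) * Real.log n)‖ ≤
      2 * √N * (‖z - s‖ * Real.log N) ^ 2 := by
  have hterm (n : ℕ) (hn : n ∈ Finset.range (N + 1)) :
      ‖c n * ((n : ℂ) ^ (-z) - (n : ℂ) ^ (-s) * (1 - (z - s) * Real.log n))‖ ≤
        1 / √n * (‖z - s‖ * Real.log N) ^ 2 := by
    rcases n.eq_zero_or_pos with rfl | hpos
    · simp [hc0]
    · exact norm_mul_natCast_cpow_neg_sub_linear_le (hc n) hs hpos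
        (Finset.mem_range_succ_iff.1 hn) hz
  have hsum : ∑ n ∈ Finset.range (N + 1), c n * (n : ℂ) ^ (-z) -
      (∑ n ∈ Finset.range (N + 1), c n * (n : ℂ) ^ (-s) -
        (z - s) * ∑ n ∈ Finset.range (N + 1), c n * (n : ℂ) ^ (-s) * Real.log n) =
      ∑ n ∈ Finset.range (N + 1),
        c n * ((n : ℂ) ^ (-z) - (n : ℂ) ^ (-s) * (1 - (z - s) * Real.log n)) := by
    rw [Finset.mul_sum, ← Finset.sum_sub_distrib, ← Finset.sum_sub_distrib]
    exact Finset.sum_congr rfl fun n _ => by ring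
  rw [hsum]
  refine (norm_sum_le_of_le _ hterm).trans ?_
  rw [← Finset.sum_mul]
  gcongr
  exact sum_range_one_div_sqrt_le N

/-- The quotient of `dhCorrection κ s y` by `y ^ (-s)`. -/
noncomputable def dhCorrectionFactor (κ s : ℂ) (y : ℝ) : ℂ :=
  (3 + κ) / 5 - (2 + κ) / 5 * (s * (s + 1)) / (y : ℂ) ^ 2

variable {κ s z : ℂ} {y : ℝ}

theorem dhCorrection_eq_cpow_mul (hy : 0 < y) :
    dhCorrection κ s y = (y : ℂ) ^ (-s) * dhCorrectionFactor κ s y := by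
  have hy' : (y : ℂ) ≠ 0 := ofReal_ne_zero.2 hy.ne'
  rw [dhCorrection, dhCorrectionFactor, neg_add, Complex.cpow_add _ _ hy', Complex.cpow_neg _ 2,
    show (2 : ℂ) = (2 : ℕ) from rfl, Complex.cpow_natCast]
  field_simp

theorem norm_dhCorrectionFactor_le_one (hκ : ‖κ‖ ≤ 1) (hs : 2 * (‖s‖ + 1) ≤ y) :
    ‖dhCorrectionFactor κ s y‖ ≤ 1 := by
  have hs0 := norm_nonneg s
  have hsecond : ‖(2 + κ) / 5 * (s * (s + 1)) / (y : ℂ) ^ 2‖ ≤ 1 / 5 := by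
    rw [norm_div, norm_mul, norm_mul, norm_pow, norm_real, Real.norm_of_nonneg (by linarith),
      div_le_iff₀ (by nlinarith)]
    have hs1 : ‖s + 1‖ ≤ ‖s‖ + 1 := norm_add_le_of_le le_rfl norm_one.le
    calc _ ≤ 3 / 5 * (‖s‖ * (‖s‖ + 1)) := by
          gcongr
          exact (norm_add_div_five_le hκ 2).trans_eq (by norm_num)
      _ ≤ _ := by nlinarith
  exact (norm_sub_le_of_le (norm_add_div_five_le hκ 3) hsecond).trans_eq (by norm_num)

theorem norm_dhCorrectionFactor_sub_le (hκ : ‖κ‖ ≤ 1) (hs : 2 * (‖s‖ + 1) ≤ y)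
    (hz : 2 * (‖z‖ + 1) ≤ y) :
    ‖dhCorrectionFactor κ z y - dhCorrectionFactor κ s y‖ ≤ ‖z - s‖ := by
  have hs0 := norm_nonneg s
  have hdiff : dhCorrectionFactor κ z y - dhCorrectionFactor κ s y =
      -((2 + κ) / 5 * (z + s + 1) / (y : ℂ) ^ 2) * (z - s) := by
    simp only [dhCorrectionFactor]
    ring
  have hsum : ‖z + s + 1‖ ≤ y :=
    (norm_add_le_of_le (norm_add_le z s) norm_one.le).trans (by linarith)
  rw [hdiff, norm_mul]
  refine mul_le_of_le_one_left (norm_nonneg _) ?_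
  rw [norm_neg, norm_div, norm_mul, norm_pow, norm_real, Real.norm_of_nonneg (by linarith),
    div_le_one₀ (by nlinarith)]
  calc _ ≤ 3 / 5 * y := by gcongr; exact (norm_add_div_five_le hκ 2).trans_eq (by norm_num)
    _ ≤ y ^ 2 := by nlinarith

theorem norm_cpow_neg_sub_le (hy : 1 ≤ y) (hzs : ‖z - s‖ * Real.log y ≤ 1) :
    ‖(y : ℂ) ^ (-z) - (y : ℂ) ^ (-s)‖ ≤ y ^ (-s.re) * (2 * (‖z - s‖ * Real.log y)) := by
  have hy0 : 0 < y := by linarith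
  have hlog : |Real.log y| = Real.log y := abs_of_nonneg (Real.log_nonneg hy)
  have htaylor := norm_cpow_neg_sub_linear_le hy0 s z (by rwa [hlog])
  rw [hlog, norm_cpow_eq_rpow_re_of_pos hy0, neg_re] at htaylor
  have hlinear : ‖(y : ℂ) ^ (-s) * ((z - s) * Real.log y)‖ =
      y ^ (-s.re) * (‖z - s‖ * Real.log y) := by
    rw [norm_mul, norm_mul, norm_cpow_eq_rpow_re_of_pos hy0, neg_re, norm_real, Real.norm_eq_abs,
      hlog]
  calc _ = ‖(y : ℂ) ^ (-z) - (y : ℂ) ^ (-s) * (1 - (z - s) * Real.log y) -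
          (y : ℂ) ^ (-s) * ((z - s) * Real.log y)‖ := by
        congr 1
        ring
    _ ≤ y ^ (-s.re) * (‖z - s‖ * Real.log y) ^ 2 + y ^ (-s.re) * (‖z - s‖ * Real.log y) :=
        norm_sub_le_of_le htaylor hlinear.le
    _ ≤ y ^ (-s.re) * (‖z - s‖ * Real.log y) + y ^ (-s.re) * (‖z - s‖ * Real.log y) := by
        gcongr
        exact pow_le_of_le_one (by have := Real.log_nonneg hy; positivity) hzs two_ne_zero
    _ = _ := by ring

theorem norm_dhCorrection_sub_le (hκ : ‖κ‖ ≤ 1) (hs : 2 * (‖s‖ + 1) ≤ y)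
    (hz : 2 * (‖z‖ + 1) ≤ y) (hzs : ‖z - s‖ * Real.log y ≤ 1) :
    ‖dhCorrection κ z y - dhCorrection κ s y‖ ≤
      y ^ (-s.re) * (‖z - s‖ * (2 * Real.log y + 1)) := by
  have hy : 1 ≤ y := by linarith [norm_nonneg s]
  have hy0 : 0 < y := by linarith
  rw [dhCorrection_eq_cpow_mul hy0, dhCorrection_eq_cpow_mul hy0]
  calc _ = ‖((y : ℂ) ^ (-z) - (y : ℂ) ^ (-s)) * dhCorrectionFactor κ z y +
          (y : ℂ) ^ (-s) * (dhCorrectionFactor κ z y - dhCorrectionFactor κ s y)‖ := by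
        congr 1
        ring
    _ ≤ y ^ (-s.re) * (2 * (‖z - s‖ * Real.log y)) * 1 + y ^ (-s.re) * ‖z - s‖ := by
        refine norm_add_le_of_le ?_ ?_ <;> rw [norm_mul]
        · exact mul_le_mul (norm_cpow_neg_sub_le hy hzs) (norm_dhCorrectionFactor_le_one hκ hz)
            (norm_nonneg _) ((norm_nonneg _).trans (norm_cpow_neg_sub_le hy hzs))
        · rw [norm_cpow_eq_rpow_re_of_pos hy0, neg_re]
          gcongr
          exact norm_dhCorrectionFactor_sub_le hκ hs hz
    _ = _ := by ring

end Linearization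

section Certificate

open ComplexBall

/-- An approximation to the zero off the critical line. -/
noncomputable def dhCenter : ℂ := ⟨0.8085171825, 85.6993484854⟩

/-- The degenerate ball containing `dhCenter`. -/
def dhCenterBall : ComplexBall := ⟨808517182500000000, 85699348485400000000, 0⟩

/-- An enclosure of `dhKappa`. -/
def dhKappaBall : ComplexBall := ⟨284079043840000000, 0, 10 ^ 9⟩

/-- An enclosure of `dhCoeff dhKappa n`. -/
def dhCoeffBall (n : ℕ) : ComplexBall :=
  match n % 5 with
  | 1 => 1
  | 2 => dhKappaBall
  | 3 => -dhKappaBall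
  | 4 => -1
  | _ => 0

/-- An enclosure of `dhCorrectionFactor dhKappa dhCenter y`. -/
def dhCorrectionFactorBall (y : ℕ) : ComplexBall :=
  (3 + dhKappaBall).divNat 5 +
    -((2 + dhKappaBall).divNat 5 * (dhCenterBall * (dhCenterBall + 1))).divNat (y ^ 2)

/-- An enclosure of `dhApprox dhKappa dhCenter p.index`. -/
def dhApproxBall (p : DirichletSums) : ComplexBall :=
  p.sum + p.power dhCenterBall * dhCorrectionFactorBall p.index

/-- The state with `index = 2000` for the Dirichlet series of the Davenport–Heilbronn function at
`dhCenter`. -/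
def dhSums : DirichletSums := .iterate dhCoeffBall dhCenterBall 1999 .init

/-- The numerical certificate: `dhApprox dhKappa dhCenter 2000` has norm at most `5 * 10⁻⁷`, and its
derivative, up to the contribution of `dhCorrection`, has real part at least `1.2`. -/
def dhCertificate (p : DirichletSums) : Bool :=
  (dhApproxBall p).centerBound + (dhApproxBall p).rad ≤ 5 * 10 ^ 11 ∧
    p.logSum.re + p.logSum.rad ≤ -12 * 10 ^ 17

set_option maxHeartbeats 4000000 in
-- The kernel evaluates all `2000` terms of the sum in a single computation.
set_option maxRecDepth 100000 in
theorem dhCertificate_dhSums : dhCertificate dhSums = true := by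
  have h : dhSums.force dhCertificate = true := by decide +kernel
  rwa [DirichletSums.force_eq] at h

theorem dhCenter_mem : dhCenter ∈ dhCenterBall := by
  have hcenter : scale * dhCenter = dhCenterBall.center := by
    apply Complex.ext <;> simp [dhCenter, dhCenterBall, center, scale] <;> norm_num
  rw [mem_def, hcenter, sub_self, norm_zero]
  exact Nat.cast_nonneg _

theorem dhKappa_mem : (dhKappa : ℂ) ∈ dhKappaBall := by
  have hcenter : dhKappaBall.center = (scale * 0.28407904384 : ℝ) := by
    simp only [center, dhKappaBall, scale]
    push_cast
    norm_num
  have hsub : scale * (dhKappa : ℂ) - dhKappaBall.center =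
      ((scale * (dhKappa - 0.28407904384) : ℝ) : ℂ) := by
    rw [hcenter]
    push_cast
    ring
  rw [mem_def, hsub, norm_real, norm_mul, Real.norm_of_nonneg scale_pos.le, Real.norm_eq_abs]
  refine (mul_le_mul_of_nonneg_left abs_dhKappa_sub_le scale_pos.le).trans_eq ?_
  norm_num [scale, dhKappaBall]

theorem dhCoeff_mem (n : ℕ) : dhCoeff dhKappa n ∈ dhCoeffBall n := by
  obtain h | h | h | h | h : n % 5 = 0 ∨ n % 5 = 1 ∨ n % 5 = 2 ∨ n % 5 = 3 ∨ n % 5 = 4 := by omega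
  all_goals simp only [dhCoeff, dhCoeffBall, h]
  · exact zero_mem
  · exact one_mem
  · exact dhKappa_mem
  · exact neg_mem dhKappa_mem
  · exact neg_mem one_mem

theorem dhCorrectionFactor_mem {y : ℕ} (hy : 0 < y) :
    dhCorrectionFactor dhKappa dhCenter y ∈ dhCorrectionFactorBall y := by
  rw [dhCorrectionFactor, sub_eq_add_neg]
  refine add_mem ?_ (neg_mem ?_)
  · exact mem_divNat (add_mem (ofNat_mem 3) dhKappa_mem) (d := 5) (by norm_num)
  · have h := mem_divNat (mul_mem (mem_divNat (add_mem (ofNat_mem 2) dhKappa_mem)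
      (d := 5) (by norm_num)) (mul_mem dhCenter_mem (add_mem dhCenter_mem one_mem)))
      (pow_pos hy 2)
    simpa only [Nat.cast_ofNat, Nat.cast_pow, ofReal_natCast] using h

theorem log_two_thousand_le : Real.log 2000 ≤ 8 := by
  rw [Real.log_le_iff_le_exp (by norm_num), show (8 : ℝ) = (8 : ℕ) from rfl, ← Real.exp_one_pow]
  calc (2000 : ℝ) ≤ 2.7 ^ 8 := by norm_num
    _ ≤ _ := by gcongr; exact (Real.exp_one_gt_d9.trans' (by norm_num)).le

theorem norm_dhCenter_le : ‖dhCenter‖ ≤ 85.9 := by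
  rw [Complex.norm_def, dhCenter, normSq_mk]
  exact Real.sqrt_le_iff.2 ⟨by norm_num, by norm_num⟩

theorem norm_dhCenter_mul_log_le : ‖dhCenter‖ * Real.log (2000 : ℕ) ≤ 2 ^ 10 := by
  calc _ ≤ 85.9 * 8 := mul_le_mul norm_dhCenter_le (mod_cast log_two_thousand_le)
        (Real.log_natCast_nonneg _) (by norm_num)
    _ ≤ _ := by norm_num

theorem index_dhSums : dhSums.index = 2000 := DirichletSums.index_iterate 1999 _

theorem dhSums_encloses : dhSums.Encloses (dhCoeff dhKappa) dhCenter :=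
  (DirichletSums.encloses_init (dhCoeff_of_five_dvd (dvd_zero 5)) dhCenter).iterate
    dhCoeff_mem dhCenter_mem 1999 norm_dhCenter_mul_log_le

theorem dhApprox_mem : dhApprox dhKappa dhCenter dhSums.index ∈ dhApproxBall dhSums := by
  have hpos : (0 : ℝ) < dhSums.index := Nat.cast_pos.2 dhSums_encloses.index_pos
  rw [dhApprox, dhCorrection_eq_cpow_mul hpos, ofReal_natCast]
  refine add_mem dhSums_encloses.sum_mem (mul_mem (dhSums_encloses.power_mem dhCenter_mem ?_)
    (dhCorrectionFactor_mem dhSums_encloses.index_pos))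
  rw [index_dhSums]
  exact norm_dhCenter_mul_log_le

theorem norm_dhApprox_dhCenter_le : ‖dhApprox dhKappa dhCenter 2000‖ ≤ 5e-7 := by
  have hcertificate :
      ((dhApproxBall dhSums).centerBound + (dhApproxBall dhSums).rad : ℝ) ≤ 5 * 10 ^ 11 :=
    mod_cast (of_decide_eq_true dhCertificate_dhSums).1
  have hbound := (norm_scale_mul_le dhApprox_mem).trans hcertificate
  rw [index_dhSums, norm_mul, Complex.norm_natCast] at hbound
  norm_num [scale] at hbound ⊢
  linarith

/-- Minus the derivative at `dhCenter` of the partial sum of the Dirichlet series over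
`n < 2000`. -/
noncomputable def dhSlope : ℂ :=
  ∑ n ∈ Finset.range 2000, dhCoeff dhKappa n * (n : ℂ) ^ (-dhCenter) * Real.log n

theorem le_norm_dhSlope : 1.2 ≤ ‖dhSlope‖ := by
  have hmem : dhSlope ∈ dhSums.logSum := by
    rw [dhSlope, ← index_dhSums]
    exact dhSums_encloses.logSum_mem
  have hcertificate : (dhSums.logSum.re + dhSums.logSum.rad : ℝ) ≤ -12 * 10 ^ 17 :=
    mod_cast (of_decide_eq_true dhCertificate_dhSums).2
  have hre : 10 ^ 18 * dhSlope.re ≤ -12 * 10 ^ 17 := by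
    refine le_trans (le_of_eq ?_) ((re_le hmem).trans hcertificate)
    norm_num only [scale]
  have habs := (neg_le_abs _).trans (abs_re_le_norm dhSlope)
  norm_num at hre ⊢
  linarith

end Certificate

section Zero

open Metric

variable {z : ℂ}

theorem two_thousand_rpow_neg_le {x : ℝ} (hx : 0.8 ≤ x) : (2000 : ℝ) ^ (-x) ≤ 1 / 430 := by
  have hpow : (430 : ℝ) ≤ 2000 ^ (0.8 : ℝ) := by
    rw [← pow_le_pow_iff_left₀ (by norm_num) (by positivity) (by norm_num : 5 ≠ 0),
      ← Real.rpow_mul_natCast (by norm_num), show (0.8 : ℝ) * (5 : ℕ) = (4 : ℕ) by norm_num,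
      Real.rpow_natCast]
    norm_num
  calc (2000 : ℝ) ^ (-x) ≤ 2000 ^ (-0.8 : ℝ) := by gcongr; norm_num
    _ ≤ 1 / 430 := by
      rw [Real.rpow_neg (by norm_num), inv_eq_one_div]
      gcongr

theorem norm_le_of_mem_closedBall_dhCenter (hz : z ∈ closedBall dhCenter 1.7e-5) : ‖z‖ ≤ 86 := by
  have h := norm_le_of_mem_closedBall hz
  have hcenter := norm_dhCenter_le
  norm_num at h hcenter ⊢
  linarith

theorem abs_re_sub_le (hz : z ∈ closedBall dhCenter 1.7e-5) :
    |z.re - 0.8085171825| ≤ 1.7e-5 :=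
  (abs_re_le_norm (z - dhCenter)).trans (mem_closedBall_iff_norm.1 hz)

theorem abs_im_sub_le (hz : z ∈ closedBall dhCenter 1.7e-5) :
    |z.im - 85.6993484854| ≤ 1.7e-5 :=
  (abs_im_le_norm (z - dhCenter)).trans (mem_closedBall_iff_norm.1 hz)

theorem norm_tsum_dhBlockError_le_of_mem_closedBall (hz : z ∈ closedBall dhCenter 1.7e-5) :
    ‖∑' i : ℕ, dhBlockError dhKappa z (5 * ((399 : ℕ) + 1 + i))‖ ≤ 2.1e-6 := by
  have hre : 0.8 ≤ z.re := by
    have h := (abs_le.1 (abs_re_sub_le hz)).1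
    norm_num at h ⊢
    linarith
  have hpoch : ‖(ascPochhammer ℂ 5).eval z‖ ≤ 91 ^ 5 := by
    refine (norm_ascPochhammer_eval_le z 5).trans ?_
    gcongr
    push_cast
    linarith [norm_le_of_mem_closedBall_dhCenter hz]
  have hpow : (5 * ((399 : ℕ) + 1 : ℝ)) ^ (-z.re) ≤ 1 / 430 := by
    rw [show (5 * ((399 : ℕ) + 1) : ℝ) = 2000 by norm_num]
    exact two_thousand_rpow_neg_le hre
  calc _ ≤ 45 * ‖(ascPochhammer ℂ 5).eval z‖ * (5 * ((399 : ℕ) + 1)) ^ (-z.re) /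
          (12500 * (399 : ℕ) ^ 4) :=
        norm_tsum_dhBlockError_le norm_dhKappa_le_one (by linarith) (by norm_num)
    _ ≤ 45 * 91 ^ 5 * (1 / 430) / (12500 * (399 : ℕ) ^ 4) := by gcongr
    _ ≤ 2.1e-6 := by norm_num

theorem norm_dhSum_sub_linear_le (hz : z ∈ closedBall dhCenter 1.7e-5) :
    ‖∑ n ∈ Finset.range 2000, dhCoeff dhKappa n * (n : ℂ) ^ (-z) -
      (∑ n ∈ Finset.range 2000, dhCoeff dhKappa n * (n : ℂ) ^ (-dhCenter) -
        (z - dhCenter) * dhSlope)‖ ≤ 1.66e-6 := by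
  have hlog : Real.log (1999 : ℕ) ≤ 8 :=
    (Real.log_le_log (by norm_num) (by norm_num)).trans log_two_thousand_le
  have hdist : ‖z - dhCenter‖ * Real.log (1999 : ℕ) ≤ 1.7e-5 * 8 :=
    mul_le_mul (mem_closedBall_iff_norm.1 hz) hlog (Real.log_natCast_nonneg _) (by norm_num)
  have hsqrt : √(1999 : ℕ) ≤ 44.75 := Real.sqrt_le_iff.2 ⟨by norm_num, by norm_num⟩
  have hre : 1 / 2 ≤ dhCenter.re := by norm_num [dhCenter]
  refine (norm_sum_cpow_neg_sub_linear_le (dhCoeff_of_five_dvd (dvd_zero 5))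
    (norm_dhCoeff_le_one norm_dhKappa_le_one) hre (hdist.trans (by norm_num))).trans ?_
  calc _ ≤ (2 * 44.75 : ℝ) * (1.7e-5 * 8) ^ 2 := by gcongr
    _ ≤ 1.66e-6 := by norm_num

theorem norm_dhCorrection_sub_dhCenter_le (hz : z ∈ closedBall dhCenter 1.7e-5) :
    ‖dhCorrection dhKappa z (2000 : ℕ) - dhCorrection dhKappa dhCenter (2000 : ℕ)‖ ≤ 7e-7 := by
  have hdist := mem_closedBall_iff_norm.1 hz
  have hlog : Real.log (2000 : ℕ) ≤ 8 := mod_cast log_two_thousand_le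
  have hlog0 := Real.log_natCast_nonneg 2000
  have hpow : ((2000 : ℕ) : ℝ) ^ (-dhCenter.re) ≤ 1 / 430 :=
    mod_cast two_thousand_rpow_neg_le (by norm_num [dhCenter])
  have hcenter : 2 * (‖dhCenter‖ + 1) ≤ (2000 : ℕ) := by
    have h := norm_dhCenter_le
    norm_num at h ⊢
    linarith
  have hz' : 2 * (‖z‖ + 1) ≤ (2000 : ℕ) := by
    have h := norm_le_of_mem_closedBall_dhCenter hz
    norm_num
    linarith
  have hsmall : ‖z - dhCenter‖ * Real.log (2000 : ℕ) ≤ 1 :=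
    (mul_le_mul hdist hlog hlog0 (by norm_num)).trans (by norm_num)
  refine (norm_dhCorrection_sub_le norm_dhKappa_le_one hcenter hz' hsmall).trans ?_
  calc _ ≤ (1 / 430 : ℝ) * (1.7e-5 * (2 * 8 + 1)) := by gcongr
    _ ≤ 7e-7 := by norm_num

theorem norm_dhFunction_sub_linear_le {X : DirichletCharacter ℂ 5} (hX : X 2 = Complex.I)
    (hz : z ∈ closedBall dhCenter 1.7e-5) :
    ‖dhFunction X z - (z - dhCenter) * -dhSlope‖ ≤ 5e-6 := by
  have hre : 0 < z.re := by
    have h := (abs_le.1 (abs_re_sub_le hz)).1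
    norm_num at h ⊢
    linarith
  have htail := norm_tsum_dhBlockError_le_of_mem_closedBall hz
  have hsum := norm_dhSum_sub_linear_le hz
  have hcorrection := norm_dhCorrection_sub_dhCenter_le hz
  have hcenter := norm_dhApprox_dhCenter_le
  have hsplit : dhFunction X z - (z - dhCenter) * -dhSlope =
      ∑ n ∈ Finset.range 2000, dhCoeff dhKappa n * (n : ℂ) ^ (-z) -
        (∑ n ∈ Finset.range 2000, dhCoeff dhKappa n * (n : ℂ) ^ (-dhCenter) -
          (z - dhCenter) * dhSlope) +
      (dhCorrection dhKappa z (2000 : ℕ) - dhCorrection dhKappa dhCenter (2000 : ℕ)) +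
      dhApprox dhKappa dhCenter 2000 +
      ∑' i : ℕ, dhBlockError dhKappa z (5 * ((399 : ℕ) + 1 + i)) := by
    rw [dhFunction_eq_dhApprox_add_tsum hX hre 399,
      show 5 * (399 + 1) = 2000 from rfl, dhApprox, dhApprox]
    ring
  rw [hsplit]
  refine (norm_add_le_of_le (norm_add_le_of_le (norm_add_le_of_le hsum hcorrection) hcenter)
    htail).trans ?_
  norm_num

end Zero

/-- the Davenport–Heilbronn function has a zero `s` with
`0.8085 < Re s < 0.8086` and `85.6993 < Im s < 85.6994`; in particular it has a zero with
`1/2 < Re s < 1`, so the analogue of the Riemann Hypothesis fails for it. -/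
theorem dh_zero_off_critical_line (X : DirichletCharacter ℂ 5) (hX : X 2 = Complex.I) :
    ∃ s : ℂ, dhFunction X s = 0 ∧
      0.8085 < s.re ∧ s.re < 0.8086 ∧ 85.6993 < s.im ∧ s.im < 85.6994 ∧
      1 / 2 < s.re ∧ s.re < 1 := by
  have hslope : 4 * 5e-6 < 1.7e-5 * ‖-dhSlope‖ := by
    have h := le_norm_dhSlope
    rw [norm_neg]
    norm_num at h ⊢
    linarith
  obtain ⟨s, hs, hzero⟩ := exists_zero_of_norm_sub_linear_le (by norm_num)
    (differentiable_dhFunction hX).diffContOnCl hslope fun z => norm_dhFunction_sub_linear_le hX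
  have hre := abs_le.1 (abs_re_sub_le hs)
  have him := abs_le.1 (abs_im_sub_le hs)
  norm_num at hre him
  refine ⟨s, hzero, ?_, ?_, ?_, ?_, ?_, ?_⟩ <;> norm_num <;> linarith
end
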